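/- arXiv:2308.15447 — 2 statements merged into one kernel-verified Lean document; each statement's English description precedes it below -/
import Mathlib

section
/- Let M ⊂ ℝ² be a bounded, simply connected open set with smooth boundary. Let ψ : M̄ → ℝ be a smooth stream function with ψ = c* > 0 on ∂M, set u_e := ∇^⊥ψ = (−∂₂ψ, ∂₁ψ), and suppose Δψ = F(ψ) in M for some continuously differentiable function F : ℝ → ℝ (so u_e is a steady Euler flow whose vorticity is a C¹ function of the streamfunction). Suppose ψ has a unique critical point in M, that the range of ψ is [0, c*], that for every c ∈ (0, c*] the level set {ψ = c} is a smooth closed curve, and that the circulation ∮_{{ψ=c}} u_e · dℓ is nonzero for every c ∈ (0, c*]. Suppose that for each ν > 0 there is a smooth steady solution (u^ν, p^ν) of the Navier–Stokes equations u^ν·∇u^ν = −∇p^ν + νΔu^ν, div u^ν = 0 in M, such that as ν → 0, u^ν → u_e together with its first and second partial derivatives uniformly on every compact subset of M (in particular the vorticities ω^ν := curl u^ν converge to ω_e := Δψ in C¹ on compact subsets). Then F′(c) = 0 for every c ∈ [0, c*]; that is, F is constant and the Euler flow u_e has constant vorticity: Δψ ≡ ω₀ in M for some constant ω₀ ∈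 ℝ. -/
open MeasureTheory Set Function

noncomputable def pd1 (f : ℝ × ℝ → ℝ) (x : ℝ × ℝ) : ℝ := deriv (fun a => f (a, x.2)) x.1
noncomputable def pd2 (f : ℝ × ℝ → ℝ) (x : ℝ × ℝ) : ℝ := deriv (fun a => f (x.1, a)) x.2
noncomputable def lap (f : ℝ × ℝ → ℝ) (x : ℝ × ℝ) : ℝ := pd1 (pd1 f) x + pd2 (pd2 f) x


/-- The reals with the discrete topology. -/
structure DReal where
  /-- the underlying real number -/
  val : ℝ

instance : TopologicalSpace DReal := ⊥
instance : DiscreteTopology DReal := ⟨rfl⟩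

open Metric in
theorem glue_primitive {E : Type*} [NormedAddCommGroup E] [NormedSpace ℝ E]
    (M : Set E) (hM : IsOpen M) (hsc : SimplyConnectedSpace M) (w : E → E →L[ℝ] ℝ)
    (r : M → ℝ) (hr : ∀ x, 0 < r x) (f : M → E → ℝ)
    (hf : ∀ x : M, ∀ y ∈ ball (x : E) (r x), HasFDerivAt (f x) (w y) y) :
    ∃ g : E → ℝ, ∀ y ∈ M, HasFDerivAt g (w y) y := by
  have key : ∀ i j : M, ∀ p ∈ ball (i : E) (r i) ∩ ball (j : E) (r j),
      ∀ q ∈ ball (i : E) (r i) ∩ ball (j : E) (r j), f i p - f j p = f i q - f j q := by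
    intro i j p hp q hq
    have hconv : Convex ℝ (ball (i : E) (r i) ∩ ball (j : E) (r j)) :=
      (convex_ball _ _).inter (convex_ball _ _)
    have hopen : IsOpen (ball (i : E) (r i) ∩ ball (j : E) (r j)) :=
      isOpen_ball.inter isOpen_ball
    have hd : ∀ y ∈ ball (i : E) (r i) ∩ ball (j : E) (r j),
        HasFDerivAt (fun y => f i y - f j y) (0 : E →L[ℝ] ℝ) y := by
      intro y hy
      have := (hf i y hy.1).sub (hf j y hy.2)
      simpa using! this
    exact hopen.is_const_of_fderiv_eq_zero hconv.isPreconnected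
      (fun y hy => (hd y hy).differentiableAt.differentiableWithinAt)
      (fun y hy => (hd y hy).fderiv) hp hq
  let Z : FiberBundleCore M M DReal :=
    { baseSet := fun i => {x : M | (x : E) ∈ ball (i : E) (r i)}
      isOpen_baseSet := fun i => isOpen_ball.preimage continuous_subtype_val
      indexAt := id
      mem_baseSet_at := fun x => mem_ball_self (hr x)
      coordChange := fun i j x v => ⟨v.val + (f i x - f j x)⟩
      coordChange_self := by
        intro i x hx v
        show (⟨v.val + (f i x - f i x)⟩ : DReal) = v
        rw [sub_self, add_zero]
      continuousOn_coordChange := by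
        intro i j p hp
        have hc : Continuous (fun q : M × DReal => (⟨q.2.val + (f i p.1 - f j p.1)⟩ : DReal)) :=
          (continuous_of_discreteTopology (f := fun v : DReal =>
            (⟨v.val + (f i p.1 - f j p.1)⟩ : DReal))).comp continuous_snd
        refine hc.continuousWithinAt.congr (fun q hq => ?_) rfl
        show (⟨q.2.val + (f i q.1 - f j q.1)⟩ : DReal) = ⟨q.2.val + (f i p.1 - f j p.1)⟩
        rw [key i j q.1 hq.1 p.1 hp.1]
      coordChange_comp := by
        intro i j k x hx v
        show (⟨v.val + (f i x - f j x) + (f j x - f k x)⟩ : DReal) = ⟨v.val + (f i x - f k x)⟩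
        congr 1
        ring }
  have hcov : IsCoveringMap (Bundle.TotalSpace.proj : Z.TotalSpace → M) :=
    FiberBundle.isCoveringMap
  have : LocallyPathConnectedSpace M := hM.locallyPathConnectedSpace
  obtain ⟨x₀⟩ : Nonempty M := inferInstance
  obtain ⟨s, ⟨-, hs⟩, -⟩ := hcov.existsUnique_continuousMap_lifts (ContinuousMap.id M) x₀
    (⟨x₀, (⟨0⟩ : DReal)⟩ : Z.TotalSpace) rfl
  have hs' : ∀ x, (s x).proj = x := fun x => congrFun hs x
  classical
  let g : E → ℝ := fun x => if h : x ∈ M then DReal.val (s ⟨x, h⟩).2 + f ⟨x, h⟩ x else 0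
  refine ⟨g, fun y hy => ?_⟩
  let i : M := ⟨y, hy⟩
  -- the chart coordinate is locally constant
  have hcont : ContinuousAt (fun x : M => (Z.localTriv i (s x)).2) i := by
    have h1 : ContinuousAt (Z.localTriv i) (s i) := by
      apply (Z.localTriv i).continuousAt
      rw [FiberBundleCore.mem_localTriv_source]
      show (((s i).proj : M) : E) ∈ ball (i : E) (r i)
      rw [hs']
      exact mem_ball_self (hr i)
    exact (continuous_snd.continuousAt).comp (h1.comp s.continuous.continuousAt)
  have hev : ∀ᶠ x : M in nhds i, (Z.localTriv i (s x)).2 = (Z.localTriv i (s i)).2 :=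
    hcont.eventually (p := fun v => v = (Z.localTriv i (s i)).2)
      (by rw [nhds_discrete]; exact Filter.eventually_pure.2 rfl)
  have hform : ∀ x : M, (Z.localTriv i (s x)).2.val = DReal.val (s x).2 + (f x x - f i x) := by
    intro x
    have h1 : (Z.localTriv i (s x)).2 = Z.coordChange (Z.indexAt (s x).1) i (s x).1 (s x).2 := rfl
    rw [h1]
    show DReal.val (s x).2 + (f ((s x).proj) ((s x).proj) - f i ((s x).proj)) = _
    rw [hs']
  set v0 : ℝ := (Z.localTriv i (s i)).2.val with hv0
  have hev2 : ∀ᶠ x in nhds y, g x = v0 + f i x := by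
    have h2 : Filter.map ((↑) : M → E) (nhds i) = nhds y := map_nhds_subtype_coe_eq_nhds hy (hM.mem_nhds hy)
    rw [← h2, Filter.eventually_map]
    filter_upwards [hev] with x hx
    have h3 := hform x
    rw [hx] at h3
    have : g x = DReal.val (s x).2 + f x x := by
      simp only [g, x.2, dif_pos]
    rw [this, hv0, h3]
    ring
  have hd : HasFDerivAt (fun x => v0 + f i x) (w y) y :=
    (hf i y (mem_ball_self (hr i))).const_add v0
  exact hd.congr_of_eventuallyEq hev2

theorem pd1_of_hasFDerivAt {f : ℝ × ℝ → ℝ} {x : ℝ × ℝ} {f' : ℝ × ℝ →L[ℝ] ℝ}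
    (h : HasFDerivAt f f' x) : pd1 f x = f' (1, 0) := by
  have h1 : HasDerivAt (fun a : ℝ => ((a, x.2) : ℝ × ℝ)) ((1 : ℝ), (0 : ℝ)) x.1 :=
    (hasDerivAt_id x.1).prodMk (hasDerivAt_const x.1 x.2)
  exact (HasFDerivAt.comp_hasDerivAt (f := fun a : ℝ => ((a, x.2) : ℝ × ℝ)) x.1 h h1).deriv

theorem pd2_of_hasFDerivAt {f : ℝ × ℝ → ℝ} {x : ℝ × ℝ} {f' : ℝ × ℝ →L[ℝ] ℝ}
    (h : HasFDerivAt f f' x) : pd2 f x = f' (0, 1) := by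
  have h1 : HasDerivAt (fun a : ℝ => ((x.1, a) : ℝ × ℝ)) ((0 : ℝ), (1 : ℝ)) x.2 :=
    (hasDerivAt_const x.2 x.1).prodMk (hasDerivAt_id x.2)
  exact (HasFDerivAt.comp_hasDerivAt (f := fun a : ℝ => ((x.1, a) : ℝ × ℝ)) x.2 h h1).deriv

theorem smooth_diff {E F : Type*} [NormedAddCommGroup E] [NormedSpace ℝ E]
    [NormedAddCommGroup F] [NormedSpace ℝ F] {f : E → F}
    (h : ContDiff ℝ (⊤ : ℕ∞) f) : Differentiable ℝ f :=
  h.differentiable (by simp)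

theorem two_le_smooth : (2 : WithTop ℕ∞) ≤ ((⊤ : ℕ∞) : WithTop ℕ∞) := by
  have h : ((2 : ℕ∞) : WithTop ℕ∞) ≤ ((⊤ : ℕ∞) : WithTop ℕ∞) := WithTop.coe_le_coe.2 le_top
  exact h

theorem pd1_eq {f : ℝ × ℝ → ℝ} (h : ContDiff ℝ (⊤ : ℕ∞) f) :
    pd1 f = fun x => fderiv ℝ f x (1, 0) :=
  funext fun x => pd1_of_hasFDerivAt (smooth_diff h x).hasFDerivAt

theorem pd2_eq {f : ℝ × ℝ → ℝ} (h : ContDiff ℝ (⊤ : ℕ∞) f) :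
    pd2 f = fun x => fderiv ℝ f x (0, 1) :=
  funext fun x => pd2_of_hasFDerivAt (smooth_diff h x).hasFDerivAt

theorem smooth_fderiv_apply {f : ℝ × ℝ → ℝ} (h : ContDiff ℝ (⊤ : ℕ∞) f) (v : ℝ × ℝ) :
    ContDiff ℝ (⊤ : ℕ∞) (fun x => fderiv ℝ f x v) :=
  (h.fderiv_right (m := (⊤ : ℕ∞)) (by simp)).clm_apply contDiff_const

theorem smooth_pd1 {f : ℝ × ℝ → ℝ} (h : ContDiff ℝ (⊤ : ℕ∞) f) :
    ContDiff ℝ (⊤ : ℕ∞) (pd1 f) := by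
  rw [pd1_eq h]; exact smooth_fderiv_apply h _

theorem smooth_pd2 {f : ℝ × ℝ → ℝ} (h : ContDiff ℝ (⊤ : ℕ∞) f) :
    ContDiff ℝ (⊤ : ℕ∞) (pd2 f) := by
  rw [pd2_eq h]; exact smooth_fderiv_apply h _

theorem fderiv_fderiv_apply {f : ℝ × ℝ → ℝ} (h : ContDiff ℝ (⊤ : ℕ∞) f) (v w x : ℝ × ℝ) :
    fderiv ℝ (fun y => fderiv ℝ f y v) x w = fderiv ℝ (fderiv ℝ f) x w v := by
  have h1 : DifferentiableAt ℝ (fderiv ℝ f) x :=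
    smooth_diff (h.fderiv_right (m := (⊤ : ℕ∞)) (by simp)) x
  rw [fderiv_clm_apply h1 (differentiableAt_const v)]
  simp

theorem pd_comm {f : ℝ × ℝ → ℝ} (h : ContDiff ℝ (⊤ : ℕ∞) f) :
    pd1 (pd2 f) = pd2 (pd1 f) := by
  rw [pd1_eq (smooth_pd2 h), pd2_eq (smooth_pd1 h), pd1_eq h, pd2_eq h]
  funext x
  rw [fderiv_fderiv_apply h, fderiv_fderiv_apply h]
  have : IsSymmSndFDerivAt ℝ f x := (h.contDiffAt).isSymmSndFDerivAt (by simpa using two_le_smooth)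
  exact this _ _

theorem lap_comp_eq {v : ℝ × ℝ → ℝ × ℝ} (h : ContDiff ℝ (⊤ : ℕ∞) v) (L : ℝ × ℝ →L[ℝ] ℝ)
    (x : ℝ × ℝ) :
    lap (fun y => L (v y)) x = L (iteratedFDeriv ℝ 2 v x ![(1, 0), (1, 0)]) +
      L (iteratedFDeriv ℝ 2 v x ![(0, 1), (0, 1)]) := by
  have hL : ContDiff ℝ (⊤ : ℕ∞) (fun y => L (v y)) := L.contDiff.comp h
  have key : ∀ e : ℝ × ℝ, fderiv ℝ (fderiv ℝ (fun y => L (v y))) x e e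
      = L (iteratedFDeriv ℝ 2 v x ![e, e]) := by
    intro e
    have h1 : iteratedFDeriv ℝ 2 (L ∘ v) x = L.compContinuousMultilinearMap (iteratedFDeriv ℝ 2 v x) :=
      L.iteratedFDeriv_comp_left (h.contDiffAt (x := x)) two_le_smooth
    have h2 := congrArg (fun T => T ![e, e]) h1
    simpa [iteratedFDeriv_two_apply, comp_def] using h2
  unfold lap
  rw [pd1_eq (smooth_pd1 hL), pd2_eq (smooth_pd2 hL), pd1_eq hL, pd2_eq hL]
  simp only [fderiv_fderiv_apply hL, key]

/-- The one-form whose primitive is the stream function. -/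
noncomputable def sform (v : ℝ × ℝ → ℝ × ℝ) (y : ℝ × ℝ) : ℝ × ℝ →L[ℝ] ℝ :=
  (v y).2 • ContinuousLinearMap.fst ℝ ℝ ℝ - (v y).1 • ContinuousLinearMap.snd ℝ ℝ ℝ

theorem smooth_fst {v : ℝ × ℝ → ℝ × ℝ} (h : ContDiff ℝ (⊤ : ℕ∞) v) :
    ContDiff ℝ (⊤ : ℕ∞) (fun y => (v y).1) := contDiff_fst.comp h

theorem smooth_snd {v : ℝ × ℝ → ℝ × ℝ} (h : ContDiff ℝ (⊤ : ℕ∞) v) :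
    ContDiff ℝ (⊤ : ℕ∞) (fun y => (v y).2) := contDiff_snd.comp h

theorem smooth_sform {v : ℝ × ℝ → ℝ × ℝ} (h : ContDiff ℝ (⊤ : ℕ∞) v) :
    ContDiff ℝ (⊤ : ℕ∞) (sform v) :=
  ((smooth_snd h).smul contDiff_const).sub ((smooth_fst h).smul contDiff_const)

theorem exists_stream (M : Set (ℝ × ℝ)) (hM : IsOpen M) (hsc : SimplyConnectedSpace M)
    (v : ℝ × ℝ → ℝ × ℝ) (hv : ContDiff ℝ (⊤ : ℕ∞) v)
    (hdiv : ∀ x ∈ M, pd1 (fun y => (v y).1) x + pd2 (fun y => (v y).2) x = 0) :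
    ∃ g : ℝ × ℝ → ℝ, ∀ y ∈ M, HasFDerivAt g (sform v y) y := by
  have hball : ∀ x : M, ∃ r > 0, Metric.ball (x : ℝ × ℝ) r ⊆ M := fun x =>
    Metric.isOpen_iff.1 hM x x.2
  choose r hr hrM using hball
  have hloc : ∀ x : M, ∃ f : ℝ × ℝ → ℝ, ∀ y ∈ Metric.ball (x : ℝ × ℝ) (r x),
      HasFDerivAt f (sform v y) y := by
    intro x
    refine (convex_ball (x : ℝ × ℝ) (r x)).exists_forall_hasFDerivAt_of_fderiv_symmetric
      Metric.isOpen_ball (smooth_diff (smooth_sform hv)).differentiableOn ?_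
    intro a ha p q
    have hd : HasFDerivAt (sform v)
        ((fderiv ℝ (fun y => (v y).2) a).smulRight (ContinuousLinearMap.fst ℝ ℝ ℝ)
          - (fderiv ℝ (fun y => (v y).1) a).smulRight (ContinuousLinearMap.snd ℝ ℝ ℝ)) a :=
      ((smooth_diff (smooth_snd hv) a).hasFDerivAt.smul_const (ContinuousLinearMap.fst ℝ ℝ ℝ)).sub
        ((smooth_diff (smooth_fst hv) a).hasFDerivAt.smul_const (ContinuousLinearMap.snd ℝ ℝ ℝ))
    have hdiv' := hdiv a (hrM x ha)
    rw [pd1_eq (smooth_fst hv), pd2_eq (smooth_snd hv)] at hdiv'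
    have hdec : ∀ (L : ℝ × ℝ →L[ℝ] ℝ) (p : ℝ × ℝ), L p = p.1 * L (1, 0) + p.2 * L (0, 1) := by
      intro L p
      have : p = p.1 • ((1 : ℝ), (0 : ℝ)) + p.2 • ((0 : ℝ), (1 : ℝ)) := by ext <;> simp
      conv_lhs => rw [this]
      simp only [map_add, map_smul, smul_eq_mul]
    rw [hd.fderiv]
    simp only [sub_apply, ContinuousLinearMap.smulRight_apply,
      smul_apply, smul_eq_mul, ContinuousLinearMap.coe_fst',
      ContinuousLinearMap.coe_snd']
    rw [hdec (fderiv ℝ (fun y => (v y).2) a) p, hdec (fderiv ℝ (fun y => (v y).2) a) q,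
      hdec (fderiv ℝ (fun y => (v y).1) a) p, hdec (fderiv ℝ (fun y => (v y).1) a) q]
    linear_combination (p.2 * q.1 - p.1 * q.2) * hdiv'
  choose f hf using hloc
  exact glue_primitive M hM hsc (sform v) r hr f hf


theorem integral_fderiv_zero {G : ℝ × ℝ → ℝ} (hG : ContDiff ℝ 1 G) (hc : HasCompactSupport G)
    (v : ℝ × ℝ) :
    Integrable (fun x => fderiv ℝ G x v) ∧ ∫ x, fderiv ℝ G x v = 0 := by
  have hcont : Continuous (fun x => fderiv ℝ G x v) :=
    (hG.continuous_fderiv (by simp)).clm_apply continuous_const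
  have hsup : HasCompactSupport (fun x => fderiv ℝ G x v) := hc.fderiv_apply ℝ v
  have hint := hcont.integrable_of_hasCompactSupport hsup (μ := volume)
  refine ⟨hint, ?_⟩
  have := integral_mul_fderiv_eq_neg_fderiv_mul_of_integrable (μ := (volume : Measure (ℝ × ℝ)))
    (f := fun _ => (1 : ℝ)) (g := G) (v := v) (by simp) (by simpa using hint)
    (by simpa using hG.continuous.integrable_of_hasCompactSupport hc (μ := volume))
    (fun x _ => differentiableAt_const _) (fun x _ => (hG.differentiable (by simp)) x)
  simpa using this

theorem sform_cont {v : ℝ × ℝ → ℝ × ℝ} (hv : ContDiff ℝ (⊤ : ℕ∞) v) : Continuous (sform v) :=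
  (smooth_sform hv).continuous

theorem stream_contDiffAt {M : Set (ℝ × ℝ)} (hM : IsOpen M)
    {v : ℝ × ℝ → ℝ × ℝ} (hv : ContDiff ℝ (⊤ : ℕ∞) v) {g : ℝ × ℝ → ℝ}
    (hg : ∀ y ∈ M, HasFDerivAt g (sform v y) y) {x : ℝ × ℝ} (hx : x ∈ M) :
    ContDiffAt ℝ 1 g x :=
  contDiffAt_one_iff.2 ⟨sform v, M, hM.mem_nhds hx, (sform_cont hv).continuousOn, hg⟩

section cutoff

variable {M K K' : Set (ℝ × ℝ)}

theorem cutoff_props (hM : IsOpen M) (hK : IsCompact K) (hKM : K ⊆ M)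
    (hK' : IsClosed K') (hK'K : K' ⊆ interior K)
    {v : ℝ × ℝ → ℝ × ℝ} (hv : ContDiff ℝ (⊤ : ℕ∞) v) {g : ℝ × ℝ → ℝ}
    (hg : ∀ y ∈ M, HasFDerivAt g (sform v y) y)
    {h : ℝ → ℝ} (hh : ContDiff ℝ 1 h) (hz : ∀ x ∈ K, x ∉ K' → h (g x) = 0)
    {q : ℝ × ℝ → ℝ} (hq : ContDiff ℝ (⊤ : ℕ∞) q) :
    ContDiff ℝ 1 (K.indicator fun x => h (g x) * q x) ∧
    HasCompactSupport (K.indicator fun x => h (g x) * q x) ∧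
    (∀ x ∈ interior K, HasFDerivAt (K.indicator fun x => h (g x) * q x)
      (h (g x) • fderiv ℝ q x + q x • (deriv h (g x) • sform v x) : ℝ × ℝ →L[ℝ] ℝ) x) ∧
    (∀ x ∉ K', HasFDerivAt (K.indicator fun x => h (g x) * q x) (0 : ℝ × ℝ →L[ℝ] ℝ) x) := by
  set H := K.indicator fun x => h (g x) * q x with hH
  have hin : ∀ x ∈ interior K, H =ᶠ[nhds x] fun x => h (g x) * q x := by
    intro x hx
    filter_upwards [mem_interior_iff_mem_nhds.1 hx] with y hy
    exact indicator_of_mem hy _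
  have hout : ∀ x ∉ K', H =ᶠ[nhds x] fun _ => 0 := by
    intro x hx
    filter_upwards [hK'.isOpen_compl.mem_nhds hx] with y hy
    by_cases hyK : y ∈ K
    · rw [hH, indicator_of_mem hyK, hz y hyK hy, zero_mul]
    · exact indicator_of_notMem hyK _
  refine ⟨?_, ?_, ?_, ?_⟩
  · rw [contDiff_iff_contDiffAt]
    intro x
    by_cases hx : x ∈ K'
    · have hxi := hK'K hx
      have hxM := hKM (interior_subset hxi)
      refine ContDiffAt.congr_of_eventuallyEq ?_ (hin x hxi)
      exact (hh.contDiffAt.comp x (stream_contDiffAt hM hv hg hxM)).mul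
        (hq.contDiffAt.of_le (by simp))
    · exact contDiffAt_const.congr_of_eventuallyEq (hout x hx)
  · refine HasCompactSupport.intro hK fun x hx => indicator_of_notMem hx _
  · intro x hx
    have hxM := hKM (interior_subset hx)
    refine HasFDerivAt.congr_of_eventuallyEq ?_ (hin x hx)
    have h1 : HasFDerivAt (fun x => h (g x)) (deriv h (g x) • sform v x) x :=
      ((hh.differentiable (by simp) (g x)).hasDerivAt).comp_hasFDerivAt x (hg x hxM)
    exact h1.mul (smooth_diff hq x).hasFDerivAt
  · intro x hx
    exact (hasFDerivAt_const _ _).congr_of_eventuallyEq (hout x hx)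

theorem ns_identity (hM : IsOpen M) (hK : IsCompact K) (hKM : K ⊆ M)
    (hK' : IsClosed K') (hK'K : K' ⊆ interior K)
    {v : ℝ × ℝ → ℝ × ℝ} (hv : ContDiff ℝ (⊤ : ℕ∞) v) {g : ℝ × ℝ → ℝ}
    (hg : ∀ y ∈ M, HasFDerivAt g (sform v y) y)
    {h : ℝ → ℝ} (hh : ContDiff ℝ 1 h) (hz : ∀ x ∈ K, x ∉ K' → h (g x) = 0)
    {p : ℝ × ℝ → ℝ} (hp : ContDiff ℝ (⊤ : ℕ∞) p) {ν : ℝ} (hν : ν ≠ 0)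
    (hNS1 : ∀ x ∈ M,
      (v x).1 * pd1 (fun y => (v y).1) x + (v x).2 * pd2 (fun y => (v y).1) x
        = - pd1 p x + ν * lap (fun y => (v y).1) x)
    (hNS2 : ∀ x ∈ M,
      (v x).1 * pd1 (fun y => (v y).2) x + (v x).2 * pd2 (fun y => (v y).2) x
        = - pd2 p x + ν * lap (fun y => (v y).2) x)
    (hdiv : ∀ x ∈ M, pd1 (fun y => (v y).1) x + pd2 (fun y => (v y).2) x = 0) :
    ∫ x in K, h (g x) * ((v x).1 * lap (fun y => (v y).1) x
      + (v x).2 * lap (fun y => (v y).2) x) = 0 := by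
  have hv1 := smooth_fst hv
  have hv2 := smooth_snd hv
  set B : ℝ × ℝ → ℝ := fun y => p y + ((v y).1 * (v y).1 + (v y).2 * (v y).2) / 2 with hB
  have hBs : ContDiff ℝ (⊤ : ℕ∞) B := hp.add (((hv1.mul hv1).add (hv2.mul hv2)).div_const 2)
  have hq1 : ContDiff ℝ (⊤ : ℕ∞) (fun y => B y * (v y).1) := hBs.mul hv1
  have hq2 : ContDiff ℝ (⊤ : ℕ∞) (fun y => B y * (v y).2) := hBs.mul hv2
  obtain ⟨a1, a2, a3, a4⟩ := cutoff_props hM hK hKM hK' hK'K hv hg hh hz hq1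
  obtain ⟨b1, b2, b3, b4⟩ := cutoff_props hM hK hKM hK' hK'K hv hg hh hz hq2
  obtain ⟨i1, z1⟩ := integral_fderiv_zero a1 a2 (1, 0)
  obtain ⟨i2, z2⟩ := integral_fderiv_zero b1 b2 (0, 1)
  set G1 := K.indicator fun x => h (g x) * (B x * (v x).1)
  set G2 := K.indicator fun x => h (g x) * (B x * (v x).2)
  have hsum : ∫ x, (fderiv ℝ G1 x (1, 0) + fderiv ℝ G2 x (0, 1)) = 0 := by
    rw [integral_add i1 i2, z1, z2, add_zero]
  have hpt : (fun x => fderiv ℝ G1 x (1, 0) + fderiv ℝ G2 x (0, 1)) = K.indicator (fun x =>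
      ν * (h (g x) * ((v x).1 * lap (fun y => (v y).1) x
      + (v x).2 * lap (fun y => (v y).2) x))) := by
    funext x
    by_cases hx : x ∈ K'
    · have hxi := hK'K hx
      have hxK := interior_subset hxi
      have hxM := hKM hxK
      rw [indicator_of_mem hxK, (a3 x hxi).fderiv, (b3 x hxi).fderiv]
      have d1 := (smooth_diff hv1 x).hasFDerivAt
      have d2 := (smooth_diff hv2 x).hasFDerivAt
      have dp := (smooth_diff hp x).hasFDerivAt
      have dB := dp.add (((d1.mul d1).add (d2.mul d2)).mul_const (1 / 2 : ℝ))
      have dB' : HasFDerivAt B _ x := dB.congr_of_eventuallyEq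
        (Filter.Eventually.of_forall fun y => by simp only [hB, Pi.add_apply, Pi.mul_apply]; ring)
      have e1 := (dB'.mul d1).fderiv
      have e2 := (dB'.mul d2).fderiv
      have n1 := hNS1 x hxM
      have n2 := hNS2 x hxM
      have n3 := hdiv x hxM
      rw [pd1_of_hasFDerivAt d1, pd2_of_hasFDerivAt d1, pd1_of_hasFDerivAt dp] at n1
      rw [pd1_of_hasFDerivAt d2, pd2_of_hasFDerivAt d2, pd2_of_hasFDerivAt dp] at n2
      rw [pd1_of_hasFDerivAt d1, pd2_of_hasFDerivAt d2] at n3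
      erw [e1, e2]
      simp only [sform, add_apply, smul_apply, sub_apply, smul_eq_mul,
        ContinuousLinearMap.coe_fst', ContinuousLinearMap.coe_snd']
      linear_combination (h (g x) * (v x).1) * n1 + (h (g x) * (v x).2) * n2
        + h (g x) * B x * n3
    · rw [(a4 x hx).fderiv, (b4 x hx).fderiv]
      by_cases hxK : x ∈ K
      · rw [indicator_of_mem hxK, hz x hxK hx]; simp
      · rw [indicator_of_notMem hxK]; simp
  rw [hpt, integral_indicator hK.measurableSet, integral_const_mul] at hsum
  exact (mul_eq_zero.1 hsum).resolve_left hν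

end cutoff


open Filter Topology in
theorem conv_of_deriv {M : Set (ℝ × ℝ)} (hM : IsOpen M) (hpc : IsPreconnected M)
    {l : Filter ℝ} {δ : ℝ → ℝ × ℝ → ℝ} {D : ℝ → ℝ × ℝ → (ℝ × ℝ →L[ℝ] ℝ)}
    (hδ : ∀ᶠ ν in l, ∀ y ∈ M, HasFDerivAt (δ ν) (D ν y) y)
    (hD : ∀ K : Set (ℝ × ℝ), IsCompact K → K ⊆ M → ∀ ε > (0 : ℝ), ∀ᶠ ν in l, ∀ x ∈ K, ‖D ν x‖ ≤ ε)
    {x₀ : ℝ × ℝ} (hx₀ : x₀ ∈ M) (h0 : ∀ᶠ ν in l, δ ν x₀ = 0) :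
    ∀ K : Set (ℝ × ℝ), IsCompact K → K ⊆ M → ∀ ε > (0 : ℝ), ∀ᶠ ν in l, ∀ x ∈ K, |δ ν x| ≤ ε := by
  have hloc : ∀ x ∈ M, ∃ r > 0, Metric.closedBall x r ⊆ M ∧
      ((∃ z ∈ Metric.closedBall x r, ∀ ε > (0 : ℝ), ∀ᶠ ν in l, |δ ν z| ≤ ε) →
        ∀ ε > (0 : ℝ), ∀ᶠ ν in l, ∀ y ∈ Metric.closedBall x r, |δ ν y| ≤ ε) := by
    intro x hx
    obtain ⟨r, hr, hrM⟩ := Metric.nhds_basis_closedBall.mem_iff.1 (hM.mem_nhds hx)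
    refine ⟨r, hr, hrM, ?_⟩
    rintro ⟨z, hz, hzε⟩ ε hε
    have hη : 0 < ε / 2 / (2 * r) := by positivity
    filter_upwards [hδ, hD _ (isCompact_closedBall x r) hrM _ hη, hzε (ε / 2) (by positivity)]
      with ν h1 h2 h3 y hy
    have h4 : ‖δ ν y - δ ν z‖ ≤ ε / 2 / (2 * r) * ‖y - z‖ :=
      (convex_closedBall x r).norm_image_sub_le_of_norm_hasFDerivWithin_le
        (fun w hw => (h1 w (hrM hw)).hasFDerivWithinAt) h2 hz hy
    have h5 : ‖y - z‖ ≤ 2 * r := by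
      rw [← dist_eq_norm]
      have := dist_triangle_right y z x
      have h6 := Metric.mem_closedBall.1 hy
      have h7 := Metric.mem_closedBall.1 hz
      linarith
    have h8 : ε / 2 / (2 * r) * ‖y - z‖ ≤ ε / 2 := by
      calc _ ≤ ε / 2 / (2 * r) * (2 * r) := by gcongr
        _ = ε / 2 := by field_simp
    rw [Real.norm_eq_abs] at h4
    have h9 : |δ ν y| ≤ |δ ν y - δ ν z| + |δ ν z| := by
      simpa using abs_add_le (δ ν y - δ ν z) (δ ν z)
    linarith
  let S : Set (ℝ × ℝ) := {x | x ∈ M ∧ ∀ ε > (0 : ℝ), ∀ᶠ ν in l, |δ ν x| ≤ ε}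
  let T : Set (ℝ × ℝ) := {x | x ∈ M ∧ ¬ ∀ ε > (0 : ℝ), ∀ᶠ ν in l, |δ ν x| ≤ ε}
  have hS : IsOpen S := by
    rw [isOpen_iff_mem_nhds]
    rintro x ⟨hx, hxε⟩
    obtain ⟨r, hr, hrM, H⟩ := hloc x hx
    filter_upwards [Metric.closedBall_mem_nhds x hr] with y hy
    refine ⟨hrM hy, fun ε hε => ?_⟩
    filter_upwards [H ⟨x, Metric.mem_closedBall_self hr.le, hxε⟩ ε hε] with ν hν using hν y hy
  have hT : IsOpen T := by
    rw [isOpen_iff_mem_nhds]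
    rintro x ⟨hx, hxε⟩
    obtain ⟨r, hr, hrM, H⟩ := hloc x hx
    filter_upwards [Metric.closedBall_mem_nhds x hr] with y hy
    refine ⟨hrM hy, fun hyε => hxε fun ε hε => ?_⟩
    filter_upwards [H ⟨y, hy, hyε⟩ ε hε] with ν hν using hν x (Metric.mem_closedBall_self hr.le)
  have hMS : M ⊆ S := by
    refine hpc.subset_left_of_subset_union hS hT ?_ ?_ ⟨x₀, hx₀, hx₀, ?_⟩
    · exact Set.disjoint_left.2 fun x hx hx' => hx'.2 hx.2
    · intro x hx
      by_cases h : ∀ ε > (0 : ℝ), ∀ᶠ ν in l, |δ ν x| ≤ ε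
      · exact Or.inl ⟨hx, h⟩
      · exact Or.inr ⟨hx, h⟩
    · intro ε hε
      filter_upwards [h0] with ν hν
      rw [hν, abs_zero]; exact hε.le
  intro K hK hKM ε hε
  refine hK.induction_on (p := fun s => ∀ᶠ ν in l, ∀ x ∈ s, |δ ν x| ≤ ε) (by simp) ?_ ?_ ?_
  · intro s t hst ht
    filter_upwards [ht] with ν hν x hx using hν x (hst hx)
  · intro s t hs ht
    filter_upwards [hs, ht] with ν h1 h2 x hx using hx.elim (h1 x) (h2 x)
  · intro x hx
    obtain ⟨r, hr, hrM, H⟩ := hloc x (hKM hx)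
    exact ⟨Metric.closedBall x r, mem_nhdsWithin_of_mem_nhds (Metric.closedBall_mem_nhds x hr),
      H ⟨x, Metric.mem_closedBall_self hr.le, (hMS (hKM hx)).2⟩ ε hε⟩


theorem norm_sform_sub_le (v w : ℝ × ℝ → ℝ × ℝ) (y : ℝ × ℝ) :
    ‖sform v y - sform w y‖ ≤ 2 * ‖v y - w y‖ := by
  refine ContinuousLinearMap.opNorm_le_bound _ (by positivity) fun z => ?_
  have h1 : (sform v y - sform w y) z = (v y - w y).2 * z.1 - (v y - w y).1 * z.2 := by
    simp only [sform, smul_apply, sub_apply, smul_eq_mul, ContinuousLinearMap.coe_fst',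
      ContinuousLinearMap.coe_snd', Prod.fst_sub, Prod.snd_sub]
    ring
  rw [h1, Real.norm_eq_abs]
  have a1 : |(v y - w y).1| ≤ ‖v y - w y‖ := norm_fst_le (v y - w y)
  have a2 : |(v y - w y).2| ≤ ‖v y - w y‖ := norm_snd_le (v y - w y)
  have a3 : |z.1| ≤ ‖z‖ := norm_fst_le z
  have a4 : |z.2| ≤ ‖z‖ := norm_snd_le z
  calc |(v y - w y).2 * z.1 - (v y - w y).1 * z.2|
      ≤ |(v y - w y).2 * z.1| + |(v y - w y).1 * z.2| := abs_sub _ _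
    _ = |(v y - w y).2| * |z.1| + |(v y - w y).1| * |z.2| := by rw [abs_mul, abs_mul]
    _ ≤ ‖v y - w y‖ * ‖z‖ + ‖v y - w y‖ * ‖z‖ := by gcongr
    _ = _ := by ring

theorem norm_sub_le_of_iter {v w : ℝ × ℝ → ℝ × ℝ} {x : ℝ × ℝ} {ε : ℝ}
    (h : ‖iteratedFDeriv ℝ 0 v x - iteratedFDeriv ℝ 0 w x‖ ≤ ε) : ‖v x - w x‖ ≤ ε := by
  have h1 := (iteratedFDeriv ℝ 0 v x - iteratedFDeriv ℝ 0 w x).le_opNorm ![]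
  simp at h1
  exact h1.trans h

theorem lap_sub_le_of_iter {v w : ℝ × ℝ → ℝ × ℝ} (hv : ContDiff ℝ (⊤ : ℕ∞) v)
    (hw : ContDiff ℝ (⊤ : ℕ∞) w) {x : ℝ × ℝ} {ε : ℝ}
    (h : ‖iteratedFDeriv ℝ 2 v x - iteratedFDeriv ℝ 2 w x‖ ≤ ε) :
    |lap (fun y => (v y).1) x - lap (fun y => (w y).1) x| ≤ 2 * ε ∧
    |lap (fun y => (v y).2) x - lap (fun y => (w y).2) x| ≤ 2 * ε := by
  have key : ∀ e : ℝ × ℝ, ‖e‖ = 1 →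
      ‖iteratedFDeriv ℝ 2 v x ![e, e] - iteratedFDeriv ℝ 2 w x ![e, e]‖ ≤ ε := by
    intro e he
    have h1 := (iteratedFDeriv ℝ 2 v x - iteratedFDeriv ℝ 2 w x).le_opNorm ![e, e]
    simp [Fin.prod_univ_two, he] at h1
    exact h1.trans h
  have k1 := key (1, 0) (by simp [Prod.norm_def])
  have k2 := key (0, 1) (by simp [Prod.norm_def])
  have gen : ∀ L : ℝ × ℝ →L[ℝ] ℝ, (∀ z, |L z| ≤ ‖z‖) →
      |lap (fun y => L (v y)) x - lap (fun y => L (w y)) x| ≤ 2 * ε := by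
    intro L hL
    rw [lap_comp_eq hv, lap_comp_eq hw]
    have e1 := (hL _).trans k1
    have e2 := (hL _).trans k2
    rw [map_sub] at e1 e2
    rw [abs_le] at *
    constructor <;> linarith [e1.1, e1.2, e2.1, e2.2]
  exact ⟨gen (ContinuousLinearMap.fst ℝ ℝ ℝ) (fun z => norm_fst_le z),
    gen (ContinuousLinearMap.snd ℝ ℝ ℝ) (fun z => norm_snd_le z)⟩

theorem smooth_lap {f : ℝ × ℝ → ℝ} (h : ContDiff ℝ (⊤ : ℕ∞) f) : ContDiff ℝ (⊤ : ℕ∞) (lap f) :=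
  (smooth_pd1 (smooth_pd1 h)).add (smooth_pd2 (smooth_pd2 h))

open Filter Topology in
theorem limit_identity {M K K' : Set (ℝ × ℝ)} (hM : IsOpen M) (hMsc : SimplyConnectedSpace M)
    (hK : IsCompact K) (hKM : K ⊆ M) (hK' : IsClosed K') (hK'K : K' ⊆ interior K)
    {ue : ℝ × ℝ → ℝ × ℝ} (hue : ContDiff ℝ (⊤ : ℕ∞) ue) {ψ : ℝ × ℝ → ℝ}
    (hψ : ∀ y ∈ M, HasFDerivAt ψ (sform ue y) y)
    {b b' : ℝ} (hb : b < b') (hψK : ∀ x ∈ K, x ∉ K' → b' < ψ x)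
    {h : ℝ → ℝ} (hh : ContDiff ℝ 1 h) (hz : ∀ t, b ≤ t → h t = 0) (hbd : ∀ t, |h t| ≤ 1)
    (u : ℝ → ℝ × ℝ → ℝ × ℝ) (p : ℝ → ℝ × ℝ → ℝ)
    (husmooth : ∀ ν > (0:ℝ), ContDiff ℝ (⊤ : ℕ∞) (u ν) ∧ ContDiff ℝ (⊤ : ℕ∞) (p ν))
    (hNS1 : ∀ ν > (0:ℝ), ∀ x ∈ M,
      (u ν x).1 * pd1 (fun y => (u ν y).1) x + (u ν x).2 * pd2 (fun y => (u ν y).1) x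
        = - pd1 (p ν) x + ν * lap (fun y => (u ν y).1) x)
    (hNS2 : ∀ ν > (0:ℝ), ∀ x ∈ M,
      (u ν x).1 * pd1 (fun y => (u ν y).2) x + (u ν x).2 * pd2 (fun y => (u ν y).2) x
        = - pd2 (p ν) x + ν * lap (fun y => (u ν y).2) x)
    (hdiv : ∀ ν > (0:ℝ), ∀ x ∈ M,
      pd1 (fun y => (u ν y).1) x + pd2 (fun y => (u ν y).2) x = 0)
    (hconv : ∀ K : Set (ℝ × ℝ), IsCompact K → K ⊆ M → ∀ ε > (0:ℝ), ∃ ν₀ > (0:ℝ),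
      ∀ ν : ℝ, 0 < ν → ν < ν₀ → ∀ x ∈ K, ∀ i ≤ 2,
        ‖iteratedFDeriv ℝ i (u ν) x - iteratedFDeriv ℝ i ue x‖ ≤ ε) :
    ∫ x in K, h (ψ x) * ((ue x).1 * lap (fun y => (ue y).1) x
      + (ue x).2 * lap (fun y => (ue y).2) x) = 0 := by
  have hpos : ∀ᶠ ν : ℝ in 𝓝[>] 0, 0 < ν := eventually_mem_nhdsWithin
  have hconv' : ∀ K : Set (ℝ × ℝ), IsCompact K → K ⊆ M → ∀ ε > (0:ℝ), ∀ᶠ ν in 𝓝[>] (0 : ℝ),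
      ∀ x ∈ K, ∀ i ≤ 2, ‖iteratedFDeriv ℝ i (u ν) x - iteratedFDeriv ℝ i ue x‖ ≤ ε := by
    intro K hK hKM ε hε
    obtain ⟨ν₀, hν₀, H⟩ := hconv K hK hKM ε hε
    filter_upwards [Ioo_mem_nhdsGT hν₀] with ν hν using H ν hν.1 hν.2
  obtain ⟨x₀⟩ : Nonempty M := inferInstance
  have hpc : IsPreconnected M := by
    have : PathConnectedSpace M := inferInstance
    exact (isPathConnected_iff_pathConnectedSpace.2 this).isConnected.isPreconnected
  have hstream : ∀ ν : ℝ, ∃ g : ℝ × ℝ → ℝ, 0 < ν →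
      (∀ y ∈ M, HasFDerivAt g (sform (u ν) y) y) ∧ g x₀ = ψ x₀ := by
    intro ν
    by_cases hν : 0 < ν
    · obtain ⟨g, hg⟩ := exists_stream M hM hMsc (u ν) (husmooth ν hν).1 (hdiv ν hν)
      refine ⟨fun y => g y + (ψ x₀ - g x₀), fun _ => ⟨fun y hy => (hg y hy).add_const _, ?_⟩⟩
      ring
    · exact ⟨0, fun h => absurd h hν⟩
  choose g hg using hstream
  have hgconv : ∀ ε > (0 : ℝ), ∀ᶠ ν in 𝓝[>] (0 : ℝ), ∀ x ∈ K, |g ν x - ψ x| ≤ ε := by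
    refine conv_of_deriv hM hpc (δ := fun ν y => g ν y - ψ y)
      (D := fun ν y => sform (u ν) y - sform ue y) ?_ ?_ x₀.2 ?_ K hK hKM
    · filter_upwards [hpos] with ν hν y hy using ((hg ν hν).1 y hy).sub (hψ y hy)
    · intro L hL hLM ε hε
      filter_upwards [hconv' L hL hLM (ε / 2) (by positivity)] with ν hν x hx
      have h1 := norm_sub_le_of_iter (hν x hx 0 (by norm_num))
      have h2 := norm_sform_sub_le (u ν) ue x
      linarith
    · filter_upwards [hpos] with ν hν
      rw [(hg ν hν).2, sub_self]
  have hzero : ∀ᶠ ν in 𝓝[>] (0 : ℝ), ∫ x in K, h (g ν x) * ((u ν x).1 * lap (fun y => (u ν y).1) x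
      + (u ν x).2 * lap (fun y => (u ν y).2) x) = 0 := by
    filter_upwards [hpos, hgconv (b' - b) (by linarith)] with ν hν h1
    refine ns_identity hM hK hKM hK' hK'K (husmooth ν hν).1 (hg ν hν).1 hh ?_ (husmooth ν hν).2
      hν.ne' (hNS1 ν hν) (hNS2 ν hν) (hdiv ν hν)
    intro x hx hx'
    apply hz
    have := (abs_le.1 (h1 x hx)).1
    have := hψK x hx hx'
    linarith
  -- bounds
  have c1 : Continuous (fun x => ‖ue x‖) := hue.continuous.norm
  have l1 := (smooth_lap (smooth_fst hue)).continuous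
  have l2 := (smooth_lap (smooth_snd hue)).continuous
  obtain ⟨C1, hC1⟩ := hK.exists_bound_of_continuousOn hue.continuous.continuousOn
  obtain ⟨C2, hC2⟩ := hK.exists_bound_of_continuousOn l1.continuousOn
  obtain ⟨C3, hC3⟩ := hK.exists_bound_of_continuousOn l2.continuousOn
  have hall : ∀ ε > (0 : ℝ), ∀ᶠ ν in 𝓝[>] (0 : ℝ), ∀ x ∈ K,
      |(u ν x).1 - (ue x).1| ≤ ε ∧ |(u ν x).2 - (ue x).2| ≤ ε ∧
      |lap (fun y => (u ν y).1) x - lap (fun y => (ue y).1) x| ≤ ε ∧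
      |lap (fun y => (u ν y).2) x - lap (fun y => (ue y).2) x| ≤ ε := by
    intro ε hε
    filter_upwards [hpos, hconv' K hK hKM (ε / 2) (by positivity)] with ν hν H x hx
    have h1 := norm_sub_le_of_iter (H x hx 0 (by norm_num))
    obtain ⟨h2, h3⟩ := lap_sub_le_of_iter (husmooth ν hν).1 hue (H x hx 2 le_rfl)
    have h4 : |(u ν x - ue x).1| ≤ ‖u ν x - ue x‖ := norm_fst_le (u ν x - ue x)
    have h5 : |(u ν x - ue x).2| ≤ ‖u ν x - ue x‖ := norm_snd_le (u ν x - ue x)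
    rw [Prod.fst_sub] at h4
    rw [Prod.snd_sub] at h5
    refine ⟨by linarith, by linarith, by linarith, by linarith⟩
  have htend : Tendsto (fun ν => ∫ x in K, h (g ν x) * ((u ν x).1 * lap (fun y => (u ν y).1) x
      + (u ν x).2 * lap (fun y => (u ν y).2) x)) (𝓝[>] (0 : ℝ))
      (𝓝 (∫ x in K, h (ψ x) * ((ue x).1 * lap (fun y => (ue y).1) x
      + (ue x).2 * lap (fun y => (ue y).2) x))) := by
    refine tendsto_integral_filter_of_dominated_convergence
      (fun _ => (C1 + 1) * (C2 + 1) + (C1 + 1) * (C3 + 1)) ?_ ?_ ?_ ?_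
    · filter_upwards [hpos] with ν hν
      have hu := (husmooth ν hν).1
      have hgc : ContinuousOn (g ν) K := fun x hx =>
        ((hg ν hν).1 x (hKM hx)).continuousAt.continuousWithinAt
      refine ContinuousOn.aestronglyMeasurable ?_ hK.measurableSet
      refine (hh.continuous.comp_continuousOn hgc).mul (Continuous.continuousOn ?_)
      exact ((smooth_fst hu).continuous.mul (smooth_lap (smooth_fst hu)).continuous).add
        ((smooth_snd hu).continuous.mul (smooth_lap (smooth_snd hu)).continuous)
    · filter_upwards [hall 1 one_pos] with ν H
      refine (ae_restrict_iff' hK.measurableSet).2 (Eventually.of_forall fun x hx => ?_)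
      obtain ⟨h1, h2, h3, h4⟩ := H x hx
      have k1 := hC1 x hx
      have k2 := hC2 x hx
      have k3 := hC3 x hx
      rw [Real.norm_eq_abs] at k2 k3
      have k4 : |(ue x).1| ≤ ‖ue x‖ := norm_fst_le (ue x)
      have k5 : |(ue x).2| ≤ ‖ue x‖ := norm_snd_le (ue x)
      have tri : ∀ a c : ℝ, |a - c| ≤ 1 → |a| ≤ |c| + 1 := by
        intro a c hac
        have := abs_sub_abs_le_abs_sub a c
        linarith
      have m1 := tri _ _ h1
      have m2 := tri _ _ h2
      have m3 := tri _ _ h3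
      have m4 := tri _ _ h4
      rw [Real.norm_eq_abs, abs_mul]
      have hC1p : 0 ≤ C1 + 1 := by linarith [abs_nonneg (u ν x).1]
      calc _ ≤ 1 * |(u ν x).1 * lap (fun y => (u ν y).1) x
              + (u ν x).2 * lap (fun y => (u ν y).2) x| := by gcongr; exact hbd _
        _ ≤ |(u ν x).1| * |lap (fun y => (u ν y).1) x|
              + |(u ν x).2| * |lap (fun y => (u ν y).2) x| := by
            rw [one_mul, ← abs_mul, ← abs_mul]; exact abs_add_le _ _
        _ ≤ _ := by
            gcongr <;> linarith
    · exact integrableOn_const (hs := hK.measure_lt_top.ne)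
    · refine (ae_restrict_iff' hK.measurableSet).2 (Eventually.of_forall fun x hx => ?_)
      have tt : ∀ (a : ℝ → ℝ) (c : ℝ), (∀ ε > (0 : ℝ), ∀ᶠ ν in 𝓝[>] (0 : ℝ), |a ν - c| ≤ ε) →
          Tendsto a (𝓝[>] (0 : ℝ)) (𝓝 c) := by
        intro a c H
        rw [Metric.tendsto_nhds]
        intro ε hε
        filter_upwards [H (ε / 2) (by positivity)] with ν hν
        rw [Real.dist_eq]; linarith
      have t0 : Tendsto (fun ν => g ν x) (𝓝[>] (0 : ℝ)) (𝓝 (ψ x)) :=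
        tt _ _ fun ε hε => (hgconv ε hε).mono fun ν H => H x hx
      have t1 : Tendsto (fun ν => (u ν x).1) (𝓝[>] (0 : ℝ)) (𝓝 (ue x).1) :=
        tt _ _ fun ε hε => (hall ε hε).mono fun ν H => (H x hx).1
      have t2 : Tendsto (fun ν => (u ν x).2) (𝓝[>] (0 : ℝ)) (𝓝 (ue x).2) :=
        tt _ _ fun ε hε => (hall ε hε).mono fun ν H => (H x hx).2.1
      have t3 := tt (fun ν => lap (fun y => (u ν y).1) x) _
        fun ε hε => (hall ε hε).mono fun ν H => (H x hx).2.2.1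
      have t4 := tt (fun ν => lap (fun y => (u ν y).2) x) _
        fun ε hε => (hall ε hε).mono fun ν H => (H x hx).2.2.2
      exact ((hh.continuous.tendsto _).comp t0).mul ((t1.mul t3).add (t2.mul t4))
  exact tendsto_nhds_unique htend
    (tendsto_const_nhds.congr' (hzero.mono fun ν hν => hν.symm))


theorem pd1_neg (f : ℝ × ℝ → ℝ) : pd1 (fun y => -(f y)) = fun y => -(pd1 f y) := by
  funext x; exact deriv.fun_neg

theorem pd2_neg (f : ℝ × ℝ → ℝ) : pd2 (fun y => -(f y)) = fun y => -(pd2 f y) := by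
  funext x; exact deriv.fun_neg

theorem lap_neg (f : ℝ × ℝ → ℝ) (x : ℝ × ℝ) : lap (fun y => -(f y)) x = -(lap f x) := by
  unfold lap
  rw [pd1_neg, pd2_neg, pd1_neg, pd2_neg]
  ring

theorem lap_pd1 {f : ℝ × ℝ → ℝ} (h : ContDiff ℝ (⊤ : ℕ∞) f) (x : ℝ × ℝ) :
    lap (pd1 f) x = pd1 (lap f) x := by
  have h1 := (smooth_diff (smooth_pd1 (smooth_pd1 h)) x).hasFDerivAt
  have h2 := (smooth_diff (smooth_pd2 (smooth_pd2 h)) x).hasFDerivAt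
  have h3 : HasFDerivAt (lap f) _ x := h1.add h2
  rw [pd1_of_hasFDerivAt h3, add_apply, ← pd1_of_hasFDerivAt h1, ← pd1_of_hasFDerivAt h2,
    pd_comm (smooth_pd2 h), pd_comm h]
  rfl

theorem lap_pd2 {f : ℝ × ℝ → ℝ} (h : ContDiff ℝ (⊤ : ℕ∞) f) (x : ℝ × ℝ) :
    lap (pd2 f) x = pd2 (lap f) x := by
  have h1 := (smooth_diff (smooth_pd1 (smooth_pd1 h)) x).hasFDerivAt
  have h2 := (smooth_diff (smooth_pd2 (smooth_pd2 h)) x).hasFDerivAt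
  have h3 : HasFDerivAt (lap f) _ x := h1.add h2
  rw [pd2_of_hasFDerivAt h3, add_apply, ← pd2_of_hasFDerivAt h1, ← pd2_of_hasFDerivAt h2,
    ← pd_comm (smooth_pd1 h), ← pd_comm h]
  rfl

theorem euler_identity {M : Set (ℝ × ℝ)} (hM : IsOpen M) {ψ : ℝ × ℝ → ℝ}
    (hψ : ContDiff ℝ (⊤ : ℕ∞) ψ) {F : ℝ → ℝ} (hF : ContDiff ℝ 1 F)
    (hFψ : ∀ x ∈ M, lap ψ x = F (ψ x)) {x : ℝ × ℝ} (hx : x ∈ M) :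
    (-(pd2 ψ x)) * lap (fun y => -(pd2 ψ y)) x + pd1 ψ x * lap (fun y => pd1 ψ y) x
      = deriv F (ψ x) * (pd1 ψ x ^ 2 + pd2 ψ x ^ 2) := by
  have hd := (smooth_diff hψ x).hasFDerivAt
  have h1 : HasFDerivAt (fun y => F (ψ y)) (deriv F (ψ x) • fderiv ℝ ψ x) x :=
    ((hF.differentiable (by simp) (ψ x)).hasDerivAt).comp_hasFDerivAt x hd
  have h2 : HasFDerivAt (lap ψ) (deriv F (ψ x) • fderiv ℝ ψ x) x := by
    refine h1.congr_of_eventuallyEq ?_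
    filter_upwards [hM.mem_nhds hx] with y hy using hFψ y hy
  have e1 : lap (fun y => pd1 ψ y) x = deriv F (ψ x) * pd1 ψ x := by
    have : lap (fun y => pd1 ψ y) x = lap (pd1 ψ) x := rfl
    rw [this, lap_pd1 hψ, pd1_of_hasFDerivAt h2, pd1_of_hasFDerivAt hd]; rfl
  have e2 : lap (fun y => -(pd2 ψ y)) x = -(deriv F (ψ x) * pd2 ψ x) := by
    rw [lap_neg, lap_pd2 hψ, pd2_of_hasFDerivAt h2, pd2_of_hasFDerivAt hd]; rfl
  rw [e1, e2]
  ring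


/-- **Prandtl–Batchelor theorem.**  Let `ψ` be a smooth streamfunction of a steady Euler
flow `u_e = ∇^⊥ψ` on a bounded, simply connected domain `M` with smooth boundary, with
`Δψ = F(ψ)` for a `C¹` function `F`, `ψ = c* > 0` on `∂M`, a unique critical point,
range `[0, c*]`, smooth closed level curves with nonvanishing circulation.  If for every
`ν > 0` there is a smooth steady Navier–Stokes solution `(u^ν, p^ν)` in `M`, and
`u^ν → u_e` in `C²` uniformly on compact subsets of `M` as `ν → 0`, then `F' ≡ 0` on
`[0, c*]`, i.e. the Euler flow has constant vorticity `Δψ ≡ ω₀` in `M`. -/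
theorem prandtl_batchelor
    (M : Set (ℝ × ℝ)) (hMopen : IsOpen M) (hMbdd : Bornology.IsBounded M)
    (hMsc : SimplyConnectedSpace M)
    -- smooth boundary: the frontier of M is a smooth closed arclength curve
    (Lb : ℝ) (hLb : 0 < Lb) (Γ : ℝ → ℝ × ℝ) (hΓ : ContDiff ℝ (⊤ : ℕ∞) Γ)
    (hΓper : Periodic Γ Lb)
    (hΓarc : ∀ s, (deriv Γ s).1 ^ 2 + (deriv Γ s).2 ^ 2 = 1)
    (hΓimg : Γ '' Ico 0 Lb = frontier M)
    -- the stream function and the Euler flow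
    (cStar : ℝ) (hc : 0 < cStar)
    (ψ : ℝ × ℝ → ℝ) (hψ : ContDiff ℝ (⊤ : ℕ∞) ψ)
    (hψbd : ∀ x ∈ frontier M, ψ x = cStar)
    (F : ℝ → ℝ) (hF : ContDiff ℝ 1 F)
    (hFψ : ∀ x ∈ M, lap ψ x = F (ψ x))
    (ue : ℝ × ℝ → ℝ × ℝ) (hue : ue = fun x => (-(pd2 ψ x), pd1 ψ x))
    -- single nondegenerate eddy hypotheses
    (hcrit : ∃! x : ℝ × ℝ, x ∈ M ∧ pd1 ψ x = 0 ∧ pd2 ψ x = 0)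
    (hrange : ψ '' closure M = Icc 0 cStar)
    (hlevels : ∀ c ∈ Ioc (0:ℝ) cStar, ∃ ℓ > (0:ℝ), ∃ γ : ℝ → ℝ × ℝ,
      ContDiff ℝ (⊤ : ℕ∞) γ ∧ Periodic γ ℓ ∧
      (∀ s, (deriv γ s).1 ^ 2 + (deriv γ s).2 ^ 2 = 1) ∧
      γ '' Ico 0 ℓ = {x ∈ closure M | ψ x = c} ∧
      (∫ s in (0:ℝ)..ℓ,
        ((ue (γ s)).1 * (deriv γ s).1 + (ue (γ s)).2 * (deriv γ s).2)) ≠ 0)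
    -- the family of steady Navier-Stokes solutions
    (u : ℝ → ℝ × ℝ → ℝ × ℝ) (p : ℝ → ℝ × ℝ → ℝ)
    (husmooth : ∀ ν > (0:ℝ), ContDiff ℝ (⊤ : ℕ∞) (u ν) ∧ ContDiff ℝ (⊤ : ℕ∞) (p ν))
    (hNS1 : ∀ ν > (0:ℝ), ∀ x ∈ M,
      (u ν x).1 * pd1 (fun y => (u ν y).1) x + (u ν x).2 * pd2 (fun y => (u ν y).1) x
        = - pd1 (p ν) x + ν * lap (fun y => (u ν y).1) x)
    (hNS2 : ∀ ν > (0:ℝ), ∀ x ∈ M,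
      (u ν x).1 * pd1 (fun y => (u ν y).2) x + (u ν x).2 * pd2 (fun y => (u ν y).2) x
        = - pd2 (p ν) x + ν * lap (fun y => (u ν y).2) x)
    (hdiv : ∀ ν > (0:ℝ), ∀ x ∈ M,
      pd1 (fun y => (u ν y).1) x + pd2 (fun y => (u ν y).2) x = 0)
    -- locally uniform C² convergence of u^ν to u_e as ν → 0
    (hconv : ∀ K : Set (ℝ × ℝ), IsCompact K → K ⊆ M → ∀ ε > (0:ℝ), ∃ ν₀ > (0:ℝ),
      ∀ ν : ℝ, 0 < ν → ν < ν₀ → ∀ x ∈ K, ∀ i ≤ 2,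
        ‖iteratedFDeriv ℝ i (u ν) x - iteratedFDeriv ℝ i ue x‖ ≤ ε) :
    (∀ c ∈ Icc (0:ℝ) cStar, deriv F c = 0) ∧
    (∃ ω₀ : ℝ, ∀ x ∈ M, lap ψ x = ω₀) := by
  subst hue
  have hue : ContDiff ℝ (⊤ : ℕ∞) (fun x => ((-(pd2 ψ x), pd1 ψ x) : ℝ × ℝ)) :=
    (smooth_pd2 hψ).neg.prodMk (smooth_pd1 hψ)
  have hψform : ∀ y ∈ M, HasFDerivAt ψ (sform (fun x => (-(pd2 ψ x), pd1 ψ x)) y) y := by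
    intro y _
    have hd := (smooth_diff hψ y).hasFDerivAt
    have e : sform (fun x => (-(pd2 ψ x), pd1 ψ x)) y = fderiv ℝ ψ y := by
      refine ContinuousLinearMap.ext fun z => ?_
      have hz : z = z.1 • ((1 : ℝ), (0 : ℝ)) + z.2 • ((0 : ℝ), (1 : ℝ)) := by ext <;> simp
      conv_rhs => rw [hz]
      simp only [sform, smul_apply, sub_apply, smul_eq_mul, ContinuousLinearMap.coe_fst',
        ContinuousLinearMap.coe_snd', map_add, map_smul, pd1_of_hasFDerivAt hd,
        pd2_of_hasFDerivAt hd]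
      ring
    rw [e]; exact hd
  have hdF : Continuous (deriv F) := hF.continuous_deriv le_rfl
  have hsub : ∀ b < cStar, {x ∈ closure M | ψ x ≤ b} ⊆ M := by
    rintro b hb x ⟨hx, hxb⟩
    by_contra hxM
    have : x ∈ frontier M := by rw [hMopen.frontier_eq]; exact ⟨hx, hxM⟩
    have := hψbd x this
    linarith
  have hclosed : ∀ b : ℝ, IsClosed {x ∈ closure M | ψ x ≤ b} := fun b =>
    isClosed_closure.inter (isClosed_le hψ.continuous continuous_const)
  have hkey : ∀ c ∈ Ioo (0:ℝ) cStar, deriv F c = 0 := by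
    intro c hcI
    by_contra hne
    obtain ⟨ρ₀, hρ₀, hρ₀'⟩ := Metric.continuous_iff.1 hdF c |deriv F c| (abs_pos.2 hne)
    obtain ⟨ρ, hρ, hρ1, hρ2⟩ : ∃ ρ > 0, ρ ≤ ρ₀ ∧ c + ρ < cStar := by
      refine ⟨min ρ₀ ((cStar - c) / 2), lt_min hρ₀ (by linarith [hcI.2]), min_le_left _ _, ?_⟩
      have := min_le_right ρ₀ ((cStar - c) / 2)
      linarith [hcI.2]
    have hsign : ∀ t ∈ Metric.ball c ρ, 0 < deriv F c * deriv F t := by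
      intro t ht
      have h1 := hρ₀' t (lt_of_lt_of_le (Metric.mem_ball.1 ht) hρ1)
      rw [Real.dist_eq] at h1
      rcases lt_or_gt_of_ne hne with h | h
      · rw [abs_of_neg h] at h1
        exact mul_pos_of_neg_of_neg h (by linarith [(abs_lt.1 h1).2])
      · rw [abs_of_pos h] at h1
        exact mul_pos h (by linarith [(abs_lt.1 h1).1])
    let f : ContDiffBump c := ⟨ρ / 2, ρ, by linarith, by linarith⟩
    obtain ⟨b', hb'1, hb'2⟩ := exists_between hρ2
    obtain ⟨b₁, hb₁1, hb₁2⟩ := exists_between hb'2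
    set K := {x ∈ closure M | ψ x ≤ b₁} with hKdef
    set K' := {x ∈ closure M | ψ x ≤ b'} with hK'def
    have hKM : K ⊆ M := hsub b₁ hb₁2
    have hK : IsCompact K := by
      refine IsCompact.of_isClosed_subset ?_ (hclosed b₁) (fun x hx => hx.1)
      exact hMbdd.isCompact_closure
    have hK'K : K' ⊆ interior K := by
      have hopen : IsOpen (M ∩ {x | ψ x < b₁}) :=
        hMopen.inter (isOpen_lt hψ.continuous continuous_const)
      refine subset_trans ?_ (interior_maximal (s := K) (t := M ∩ {x | ψ x < b₁}) ?_ hopen)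
      · intro x hx
        exact ⟨hsub b' hb'2 hx, lt_of_le_of_lt hx.2 hb₁1⟩
      · rintro x ⟨hx, hx'⟩
        exact ⟨subset_closure hx, le_of_lt hx'⟩
    have hint := limit_identity hMopen hMsc hK hKM (hclosed b') hK'K hue hψform hb'1
      (fun x hx hx' => by
        by_contra hcon
        exact hx' ⟨hx.1, not_lt.1 hcon⟩)
      (h := f) f.contDiff
      (fun t ht => f.zero_of_le_dist (by
        show ρ ≤ dist t c
        rw [Real.dist_eq]
        exact le_trans (by linarith) (le_abs_self _)))
      (fun t => by rw [abs_of_nonneg f.nonneg]; exact f.le_one)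
      u p husmooth hNS1 hNS2 hdiv hconv
    set J : ℝ × ℝ → ℝ := fun x =>
      f (ψ x) * (deriv F c * deriv F (ψ x) * (pd1 ψ x ^ 2 + pd2 ψ x ^ 2)) with hJ
    have hJcont : Continuous J := by
      have p1 := (smooth_pd1 hψ).continuous
      have p2 := (smooth_pd2 hψ).continuous
      have p0 := hψ.continuous
      exact (f.continuous.comp p0).mul ((continuous_const.mul (hdF.comp p0)).mul
        ((p1.pow 2).add (p2.pow 2)))
    have hJint : ∫ x in K, J x = 0 := by
      have e : ∫ x in K, J x = ∫ x in K, deriv F c * (f (ψ x) *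
          ((-(pd2 ψ x)) * lap (fun y => -(pd2 ψ y)) x + pd1 ψ x * lap (fun y => pd1 ψ y) x)) := by
        refine setIntegral_congr_fun hK.measurableSet fun x hx => ?_
        show _ = deriv F c * (f (ψ x) * _)
        rw [euler_identity hMopen hψ hF hFψ (hKM hx)]
        simp only [hJ]
        ring
      rw [e, integral_const_mul]
      erw [hint]
      rw [mul_zero]
    have hJ0 : ∀ x, 0 ≤ J x := by
      intro x
      by_cases hx : ψ x ∈ Metric.ball c ρ
      · have := hsign _ hx
        have := f.nonneg (x := ψ x)
        simp only [hJ]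
        positivity
      · have : f (ψ x) = 0 := f.zero_of_le_dist (not_lt.1 hx)
        simp only [hJ, this, zero_mul, le_refl]
    have hae : J =ᵐ[volume.restrict K] 0 :=
      (setIntegral_eq_zero_iff_of_nonneg_ae (Filter.Eventually.of_forall hJ0)
        (hJcont.continuousOn.integrableOn_compact hK)).1 hJint
    set V := M ∩ ψ ⁻¹' Metric.ball c ρ with hV
    have hVopen : IsOpen V := hMopen.inter (Metric.isOpen_ball.preimage hψ.continuous)
    have hVK : V ⊆ K := by
      rintro x ⟨hx, hx'⟩
      refine ⟨subset_closure hx, ?_⟩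
      have h1 : |ψ x - c| < ρ := hx'
      linarith [(abs_lt.1 h1).2]
    have hVz : EqOn J 0 V := Measure.eqOn_open_of_ae_eq
      (ae_restrict_of_ae_restrict_of_subset hVK hae) hVopen hJcont.continuousOn
      continuousOn_const
    have hVcrit : ∀ x ∈ V, x ∈ M ∧ pd1 ψ x = 0 ∧ pd2 ψ x = 0 := by
      intro x hx
      have h1 : J x = 0 := hVz hx
      have h2 := hsign _ hx.2
      have h3 : 0 < f (ψ x) := f.pos_of_mem_ball hx.2
      have h4 : pd1 ψ x ^ 2 + pd2 ψ x ^ 2 = 0 := by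
        rcases mul_eq_zero.1 h1 with h | h
        · exact absurd h h3.ne'
        · exact (mul_eq_zero.1 h).resolve_left h2.ne'
      refine ⟨hx.1, ?_, ?_⟩ <;> nlinarith [sq_nonneg (pd1 ψ x), sq_nonneg (pd2 ψ x)]
    obtain ⟨x₁, hx₁, hx₁c⟩ : c ∈ ψ '' closure M := by
      rw [hrange]; exact ⟨hcI.1.le, hcI.2.le⟩
    have hx₁V : x₁ ∈ V := by
      refine ⟨hsub c hcI.2 ⟨hx₁, hx₁c.le⟩, ?_⟩
      show ψ x₁ ∈ Metric.ball c ρ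
      rw [hx₁c]; exact Metric.mem_ball_self hρ
    have hinf : V.Infinite := infinite_of_mem_nhds x₁ (hVopen.mem_nhds hx₁V)
    refine hinf (Set.Subsingleton.finite fun x hx y hy => ?_)
    exact hcrit.unique (hVcrit x hx) (hVcrit y hy)
  have hall : ∀ c ∈ Icc (0:ℝ) cStar, deriv F c = 0 := by
    have hcl : IsClosed {c | deriv F c = 0} := isClosed_eq hdF continuous_const
    have : closure (Ioo 0 cStar) ⊆ {c | deriv F c = 0} := hcl.closure_subset_iff.2 hkey
    rw [closure_Ioo hc.ne] at this
    exact this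
  refine ⟨hall, F 0, fun x hx => ?_⟩
  have hxI : ψ x ∈ Icc 0 cStar := by rw [← hrange]; exact ⟨x, subset_closure hx, rfl⟩
  rw [hFψ x hx]
  exact constant_of_derivWithin_zero (hF.differentiable (by simp)).differentiableOn
    (fun t ht => by
      rw [((hF.differentiable (by simp)) t).derivWithin
        (uniqueDiffOn_Icc hc t ⟨ht.1, ht.2.le⟩)]
      exact hall t ⟨ht.1, ht.2.le⟩) (ψ x) hxI
end

section
/- Consider the setting of the linear problem: q_e : 𝕋_L → ℝ smooth and positive, ω₀ > 0, and smooth Q, F, G on 𝕋_L × [0,∞) with smooth b : 𝕋_L → ℝ satisfying ∂_s Q − ω₀ q_e(s) ∂_ψ² Q = F + ∂_ψ² G, Q(s,0) = b(s), Q(s,ψ) → 0 as ψ → ∞. Fix integers k, m ≥ 0 and write Q^{(j)} := ∂_s^j Q, F^{(k)} := ∂_s^k F, G^{(k)} := ∂_s^k G. Then for every δ > 0 there is a constant C_δ (depending on δ, k, m, L, ω₀, q_e, with C_δ → ∞ as δ → 0) such that ‖⟨ψ⟩^m ∂_ψ Q^{(k)}‖²_{L²} ≤ C_δ ‖⟨ψ⟩^m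 F^{(k)}‖²_{L²} + C_δ ‖⟨ψ⟩^m ∂_ψ² G^{(k)}‖²_{L²} + C_δ ‖b‖²_{H^{k+1}(𝕋_L)} + δ ‖⟨ψ⟩^m Q^{(k)}‖²_{L²} + C_δ 𝟙_{k≥1} Σ_{k'=0}^{k−1} ‖⟨ψ⟩^m ∂_ψ Q^{(k')}‖²_{L²} + 𝟙_{m≥1} ‖⟨ψ⟩^{m−1} Q^{(k)}‖²_{L²}, provided all norms appearing are finite. -/
open MeasureTheory Set Function Filter

/-- `k`-th partial derivative in the tangential variable `s` of a function on
`𝕋_L × [0,∞)` (represented as a curried function `ℝ → ℝ → ℝ`). -/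
noncomputable def dS (k : ℕ) (h : ℝ → ℝ → ℝ) : ℝ → ℝ → ℝ :=
  fun s ψ => iteratedDeriv k (fun s' => h s' ψ) s

/-- `j`-th partial derivative in the normal (von Mises) variable `ψ`. -/
noncomputable def dPsi (j : ℕ) (h : ℝ → ℝ → ℝ) : ℝ → ℝ → ℝ :=
  fun s ψ => iteratedDeriv j (fun ψ' => h s ψ') ψ

/-- Squared `L²` norm over `𝕋_L × ℝ₊` (fundamental domain `(0,L] × (0,∞)`). -/
noncomputable def L2sq (L : ℝ) (h : ℝ → ℝ → ℝ) : ℝ :=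
  ∫ p in Ioc (0:ℝ) L ×ˢ Ioi (0:ℝ), (h p.1 p.2) ^ 2

/-- Square-integrability over `𝕋_L × ℝ₊`. -/
def FiniteL2 (L : ℝ) (h : ℝ → ℝ → ℝ) : Prop :=
  IntegrableOn (fun p : ℝ × ℝ => (h p.1 p.2) ^ 2) (Ioc (0:ℝ) L ×ˢ Ioi (0:ℝ))

/-- The weight `⟨ψ⟩^m h`. -/
noncomputable def wt (m : ℕ) (h : ℝ → ℝ → ℝ) : ℝ → ℝ → ℝ :=
  fun s ψ => (1 + ψ) ^ m * h s ψ

/-- Squared `X_{k,m}` norm: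
`‖h‖²_{X_{k,m}} = Σ_{k'≤k} Σ_{m'≤m} (‖⟨ψ⟩^{m'}∂_s^{k'}h‖² + ‖⟨ψ⟩^{m'}∂_s^{k'+1}h‖²
+ ‖⟨ψ⟩^{m'}∂_ψ∂_s^{k'}h‖² + ‖⟨ψ⟩^{m'}∂_ψ²∂_s^{k'}h‖²)`. -/
noncomputable def XnormSq (L : ℝ) (k m : ℕ) (h : ℝ → ℝ → ℝ) : ℝ :=
  ∑ k' ∈ Finset.range (k+1), ∑ m' ∈ Finset.range (m+1),
    (L2sq L (wt m' (dS k' h)) + L2sq L (wt m' (dS (k'+1) h))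
      + L2sq L (wt m' (dPsi 1 (dS k' h))) + L2sq L (wt m' (dPsi 2 (dS k' h))))

/-- The `X_{k,m}` norm. -/
noncomputable def Xnorm (L : ℝ) (k m : ℕ) (h : ℝ → ℝ → ℝ) : ℝ :=
  Real.sqrt (XnormSq L k m h)

/-- Membership in the space `X_{k,m}`: all the defining integrands are integrable. -/
def XFinite (L : ℝ) (k m : ℕ) (h : ℝ → ℝ → ℝ) : Prop :=
  ∀ k' ≤ k, ∀ m' ≤ m,
    FiniteL2 L (wt m' (dS k' h)) ∧ FiniteL2 L (wt m' (dS (k'+1) h))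
      ∧ FiniteL2 L (wt m' (dPsi 1 (dS k' h))) ∧ FiniteL2 L (wt m' (dPsi 2 (dS k' h)))

/-- Joint smoothness of a curried function of two real variables. -/
def Smooth2 (h : ℝ → ℝ → ℝ) : Prop :=
  ContDiff ℝ (⊤ : ℕ∞) (fun p : ℝ × ℝ => h p.1 p.2)

/-- Periodicity in the first (tangential) variable. -/
def PeriodicS (L : ℝ) (h : ℝ → ℝ → ℝ) : Prop :=
  ∀ ψ : ℝ, Function.Periodic (fun s => h s ψ) L

/-- Squared `H^n` norm of a function on `𝕋_L`. -/
noncomputable def HnormSq (L : ℝ) (n : ℕ) (b : ℝ → ℝ) : ℝ :=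
  ∑ j ∈ Finset.range (n+1), ∫ s in (0:ℝ)..L, (iteratedDeriv j b s) ^ 2


/-! ### Smoothness and commutation of partial derivatives -/

theorem smooth_hasDerivAt_s {h : ℝ → ℝ → ℝ} (hh : Smooth2 h) (s ψ : ℝ) :
    HasDerivAt (fun s' => h s' ψ) (fderiv ℝ (fun p : ℝ × ℝ => h p.1 p.2) (s, ψ) (1, 0)) s := by
  have h1 : HasFDerivAt (fun p : ℝ × ℝ => h p.1 p.2) (fderiv ℝ (fun p : ℝ × ℝ => h p.1 p.2) (s, ψ)) (s, ψ) :=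
    ((hh.differentiable (by simp)) (s, ψ)).hasFDerivAt
  have h2 : HasDerivAt (fun s' : ℝ => (s', ψ)) ((1 : ℝ), (0 : ℝ)) s :=
    (hasDerivAt_id s).prodMk (hasDerivAt_const s ψ)
  exact h1.comp_hasDerivAt s h2

theorem smooth_hasDerivAt_psi {h : ℝ → ℝ → ℝ} (hh : Smooth2 h) (s ψ : ℝ) :
    HasDerivAt (fun ψ' => h s ψ') (fderiv ℝ (fun p : ℝ × ℝ => h p.1 p.2) (s, ψ) (0, 1)) ψ := by
  have h1 : HasFDerivAt (fun p : ℝ × ℝ => h p.1 p.2) (fderiv ℝ (fun p : ℝ × ℝ => h p.1 p.2) (s, ψ)) (s, ψ) :=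
    ((hh.differentiable (by simp)) (s, ψ)).hasFDerivAt
  have h2 : HasDerivAt (fun ψ' : ℝ => (s, ψ')) ((0 : ℝ), (1 : ℝ)) ψ :=
    (hasDerivAt_const ψ s).prodMk (hasDerivAt_id ψ)
  exact h1.comp_hasDerivAt ψ h2

theorem dS_one_eq {h : ℝ → ℝ → ℝ} (hh : Smooth2 h) (s ψ : ℝ) :
    dS 1 h s ψ = fderiv ℝ (fun p : ℝ × ℝ => h p.1 p.2) (s, ψ) (1, 0) := by
  simp only [dS, iteratedDeriv_one]
  exact (smooth_hasDerivAt_s hh s ψ).deriv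

theorem dPsi_one_eq {h : ℝ → ℝ → ℝ} (hh : Smooth2 h) (s ψ : ℝ) :
    dPsi 1 h s ψ = fderiv ℝ (fun p : ℝ × ℝ => h p.1 p.2) (s, ψ) (0, 1) := by
  simp only [dPsi, iteratedDeriv_one]
  exact (smooth_hasDerivAt_psi hh s ψ).deriv

theorem hasDerivAt_dS {h : ℝ → ℝ → ℝ} (hh : Smooth2 h) (s ψ : ℝ) :
    HasDerivAt (fun s' => h s' ψ) (dS 1 h s ψ) s := by
  rw [dS_one_eq hh]; exact smooth_hasDerivAt_s hh s ψ

theorem hasDerivAt_dPsi {h : ℝ → ℝ → ℝ} (hh : Smooth2 h) (s ψ : ℝ) :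
    HasDerivAt (fun ψ' => h s ψ') (dPsi 1 h s ψ) ψ := by
  rw [dPsi_one_eq hh]; exact smooth_hasDerivAt_psi hh s ψ

theorem dS_succ (k : ℕ) (h : ℝ → ℝ → ℝ) : dS (k+1) h = dS 1 (dS k h) := by
  funext s ψ
  simp only [dS, iteratedDeriv_succ, iteratedDeriv_zero]
theorem dPsi_succ (k : ℕ) (h : ℝ → ℝ → ℝ) : dPsi (k+1) h = dPsi 1 (dPsi k h) := by
  funext s ψ
  simp only [dPsi, iteratedDeriv_succ, iteratedDeriv_zero]

theorem dS_zero (h : ℝ → ℝ → ℝ) : dS 0 h = h := by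
  funext s ψ; simp [dS]

theorem smooth_dS_one {h : ℝ → ℝ → ℝ} (hh : Smooth2 h) : Smooth2 (dS 1 h) := by
  have e : (fun p : ℝ × ℝ => dS 1 h p.1 p.2) =
      fun p => fderiv ℝ (fun p : ℝ × ℝ => h p.1 p.2) p (1, 0) := by
    funext p; exact dS_one_eq hh p.1 p.2
  unfold Smooth2
  rw [e]
  exact (hh.fderiv_right (m := ((⊤ : ℕ∞) : WithTop ℕ∞)) (by simp)).clm_apply contDiff_const

theorem smooth_dPsi_one {h : ℝ → ℝ → ℝ} (hh : Smooth2 h) : Smooth2 (dPsi 1 h) := by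
  have e : (fun p : ℝ × ℝ => dPsi 1 h p.1 p.2) =
      fun p => fderiv ℝ (fun p : ℝ × ℝ => h p.1 p.2) p (0, 1) := by
    funext p; exact dPsi_one_eq hh p.1 p.2
  unfold Smooth2
  rw [e]
  exact (hh.fderiv_right (m := ((⊤ : ℕ∞) : WithTop ℕ∞)) (by simp)).clm_apply contDiff_const

theorem smooth_dS {h : ℝ → ℝ → ℝ} (hh : Smooth2 h) (k : ℕ) : Smooth2 (dS k h) := by
  induction k with
  | zero => rwa [dS_zero]
  | succ k ih => rw [dS_succ]; exact smooth_dS_one ih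

theorem dPsi_two (h : ℝ → ℝ → ℝ) : dPsi 2 h = dPsi 1 (dPsi 1 h) := dPsi_succ 1 h

theorem smooth_dPsi_two {h : ℝ → ℝ → ℝ} (hh : Smooth2 h) : Smooth2 (dPsi 2 h) := by
  rw [dPsi_two]; exact smooth_dPsi_one (smooth_dPsi_one hh)

theorem dS_dPsi_comm_one {h : ℝ → ℝ → ℝ} (hh : Smooth2 h) :
    dS 1 (dPsi 1 h) = dPsi 1 (dS 1 h) := by
  funext s ψ
  rw [dS_one_eq (smooth_dPsi_one hh), dPsi_one_eq (smooth_dS_one hh)]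
  have e : (fun p : ℝ × ℝ => dS 1 h p.1 p.2) =
      fun p => fderiv ℝ (fun p : ℝ × ℝ => h p.1 p.2) p (1, 0) := by
    funext p; exact dS_one_eq hh p.1 p.2
  have e' : (fun p : ℝ × ℝ => dPsi 1 h p.1 p.2) =
      fun p => fderiv ℝ (fun p : ℝ × ℝ => h p.1 p.2) p (0, 1) := by
    funext p; exact dPsi_one_eq hh p.1 p.2
  have hs : IsSymmSndFDerivAt ℝ (fun p : ℝ × ℝ => h p.1 p.2) (s, ψ) :=
    (hh.contDiffAt).isSymmSndFDerivAt (by simpa using WithTop.coe_le_coe.2 (le_top : (2 : ℕ∞) ≤ ⊤))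
  have hd : DifferentiableAt ℝ (fderiv ℝ (fun p : ℝ × ℝ => h p.1 p.2)) (s, ψ) :=
    ((hh.fderiv_right (m := ((⊤ : ℕ∞) : WithTop ℕ∞)) (by simp)).differentiable (by simp)) _
  rw [e, e', fderiv_clm_apply hd (differentiableAt_const _),
    fderiv_clm_apply hd (differentiableAt_const _)]
  simpa using hs.eq (1, 0) (0, 1)

theorem dS_dPsi_comm {h : ℝ → ℝ → ℝ} (hh : Smooth2 h) (k : ℕ) :
    dS k (dPsi 1 h) = dPsi 1 (dS k h) := by
  induction k with
  | zero => simp [dS_zero]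
  | succ k ih => rw [dS_succ, ih, dS_dPsi_comm_one (smooth_dS hh k), ← dS_succ]

theorem dS_dPsi_two_comm {h : ℝ → ℝ → ℝ} (hh : Smooth2 h) (k : ℕ) :
    dS k (dPsi 2 h) = dPsi 2 (dS k h) := by
  rw [dPsi_two, dPsi_two, dS_dPsi_comm (smooth_dPsi_one hh), dS_dPsi_comm hh]

theorem smooth_slice_s {h : ℝ → ℝ → ℝ} (hh : Smooth2 h) (ψ : ℝ) :
    ContDiff ℝ (⊤ : ℕ∞) (fun s => h s ψ) :=
  ContDiff.comp (g := fun p : ℝ × ℝ => h p.1 p.2) hh (contDiff_id.prodMk contDiff_const)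

theorem iteratedDeriv_periodic {f : ℝ → ℝ} {L : ℝ} (hf : Function.Periodic f L) (k : ℕ) :
    Function.Periodic (iteratedDeriv k f) L := by
  intro s
  have h := congrFun (iteratedDeriv_comp_add_const k f L) s
  have h2 : (fun z => f (z + L)) = f := funext hf
  rw [h2] at h
  exact h.symm

/-- The differentiated equation. -/
theorem diff_equation {q_e : ℝ → ℝ} (hqe : ContDiff ℝ (⊤ : ℕ∞) q_e) {ω₀ : ℝ} (k : ℕ)
    {Q F G : ℝ → ℝ → ℝ} (hQ : Smooth2 Q) (hF : Smooth2 F) (hG : Smooth2 G)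
    (heq : ∀ s : ℝ, ∀ ψ > (0:ℝ),
        dS 1 Q s ψ - ω₀ * q_e s * dPsi 2 Q s ψ = F s ψ + dPsi 2 G s ψ) (s ψ : ℝ) (hψ : 0 < ψ) :
    dS 1 (dS k Q) s ψ = ω₀ * (∑ i ∈ Finset.range (k+1), (k.choose i : ℝ) *
      iteratedDeriv (k - i) q_e s * dPsi 2 (dS i Q) s ψ) + (dS k F s ψ + dPsi 2 (dS k G) s ψ) := by
  have e : (fun s' => dS 1 Q s' ψ) = fun s' => ω₀ * (dPsi 2 Q s' ψ * q_e s') +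
      (F s' ψ + dPsi 2 G s' ψ) := by
    funext s'
    linarith [heq s' ψ hψ]
  have hq : ContDiffAt ℝ (k : ℕ) q_e s := (hqe.of_le (by exact_mod_cast le_top)).contDiffAt
  have hsl : ∀ {h : ℝ → ℝ → ℝ}, Smooth2 h → ContDiffAt ℝ (k : ℕ) (fun s => h s ψ) s := fun hh =>
    ((smooth_slice_s hh ψ).of_le (by exact_mod_cast le_top)).contDiffAt
  have h2 := hsl (smooth_dPsi_two hQ)
  have h3 := hsl hF
  have h4 := hsl (smooth_dPsi_two hG)
  have : dS 1 (dS k Q) s ψ = iteratedDeriv k (fun s' => dS 1 Q s' ψ) s := by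
    rw [← dS_succ]
    simp only [dS, iteratedDeriv_succ', iteratedDeriv_zero]
  rw [this, e, iteratedDeriv_fun_add (contDiffAt_const.mul (h2.mul hq)) (h3.add h4),
    iteratedDeriv_const_mul _ (h2.mul hq), iteratedDeriv_fun_mul h2 hq,
    iteratedDeriv_fun_add h3 h4, ← dS_dPsi_two_comm hG]
  congr 2
  refine Finset.sum_congr rfl fun i _ => ?_
  rw [← dS_dPsi_two_comm hQ]
  simp only [dS]; ring

/-! ### The weight -/

theorem exists_weight (m : ℕ) (η : ℝ) (hη : 0 < η) :
    ∃ (W W1 W2 : ℝ → ℝ) (A : ℝ), 0 < A ∧ (∀ x, HasDerivAt W (W1 x) x) ∧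
      (∀ x, HasDerivAt W1 (W2 x) x) ∧ Continuous W ∧ Continuous W1 ∧ Continuous W2 ∧
      ∀ x, 0 < x → (((1 + x) ^ m) ^ 2 ≤ W x ∧ W x ≤ A * ((1 + x) ^ m) ^ 2 ∧
        |W1 x| ≤ A * ((1 + x) ^ m) ^ 2 ∧ |W2 x| ≤ A * ((1 + x) ^ m) ^ 2 ∧
        W2 x ≤ η * ((1 + x) ^ m) ^ 2) := by
  set M : ℕ := 2 * m with hM
  set c : ℝ := (M : ℝ) * ((M - 1 : ℕ) : ℝ) with hc
  have hc0 : 0 ≤ c := by positivity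
  set R : ℝ := c / η with hR
  have hR0 : 0 ≤ R := by positivity
  set K : ℝ := c * (1 + R) ^ (M - 2) * Real.exp R with hK
  have hK0 : 0 ≤ K := by positivity
  have hexp : ∀ x : ℝ, HasDerivAt (fun x => Real.exp (-x)) (-Real.exp (-x)) x := fun x => by
    simpa using (hasDerivAt_neg x).exp
  have hpow : ∀ (n : ℕ) (x : ℝ), HasDerivAt (fun x : ℝ => (1 + x) ^ n) ((n : ℝ) * (1 + x) ^ (n - 1)) x :=
    fun n x => by simpa using ((hasDerivAt_id' x).const_add 1).fun_pow n
  refine ⟨fun x => (1 + x) ^ M + K * (1 - Real.exp (-x)),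
    fun x => M * (1 + x) ^ (M - 1) + K * Real.exp (-x),
    fun x => c * (1 + x) ^ (M - 2) - K * Real.exp (-x), 1 + M + c + K, by positivity, ?_, ?_, by fun_prop,
    by fun_prop, by fun_prop, ?_⟩
  · intro x
    have := (hpow M x).fun_add (((hexp x).const_sub 1).const_mul K)
    simpa using this
  · intro x
    have := ((hpow (M-1) x).const_mul (M:ℝ)).fun_add ((hexp x).const_mul K)
    refine this.congr_deriv ?_
    rw [Nat.sub_sub]; simp only [hc]; ring
  · intro x hx
    have h1 : (1 : ℝ) ≤ 1 + x := by linarith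
    have hw : ((1 + x) ^ m) ^ 2 = (1 + x) ^ M := by rw [hM, ← pow_mul, mul_comm]
    rw [hw]
    have hw1 : 1 ≤ (1 + x) ^ M := one_le_pow₀ h1
    have hwm1 : (1 + x) ^ (M - 1) ≤ (1 + x) ^ M := pow_le_pow_right₀ h1 (by omega)
    have hwm2 : (1 + x) ^ (M - 2) ≤ (1 + x) ^ M := pow_le_pow_right₀ h1 (by omega)
    have p1 : 0 ≤ (1 + x) ^ (M - 1) := by positivity
    have p2 : 0 ≤ (1 + x) ^ (M - 2) := by positivity
    have e0 : 0 < Real.exp (-x) := Real.exp_pos _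
    have e1 : Real.exp (-x) ≤ 1 := Real.exp_le_one_iff.2 (by linarith)
    have hM0 : (0 : ℝ) ≤ M := by positivity
    have a1 : K * Real.exp (-x) ≤ K * (1 + x) ^ M := by gcongr; linarith
    have a1' : 0 ≤ K * Real.exp (-x) := by positivity
    have a2 : (M : ℝ) * (1 + x) ^ (M - 1) ≤ M * (1 + x) ^ M := by gcongr
    have a2' : 0 ≤ (M : ℝ) * (1 + x) ^ (M - 1) := by positivity
    have a3 : c * (1 + x) ^ (M - 2) ≤ c * (1 + x) ^ M := by gcongr
    have a3' : 0 ≤ c * (1 + x) ^ (M - 2) := by positivity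
    have a4 : K * (1 - Real.exp (-x)) ≤ K * (1 + x) ^ M := by gcongr; linarith
    have a4' : 0 ≤ K * (1 - Real.exp (-x)) := by
      apply mul_nonneg hK0; linarith
    have b1 : 0 ≤ (M : ℝ) * (1 + x) ^ M := by positivity
    have b2 : 0 ≤ c * (1 + x) ^ M := by positivity
    have b3 : 0 ≤ K * (1 + x) ^ M := by positivity
    refine ⟨by linarith, by nlinarith, ?_, ?_, ?_⟩
    · rw [abs_le]; constructor <;> nlinarith
    · rw [abs_le]; constructor <;> nlinarith
    · by_cases hxR : x ≤ R
      · have : c * (1 + x) ^ (M - 2) ≤ K * Real.exp (-x) := by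
          have : K * Real.exp (-x) = c * (1 + R) ^ (M - 2) * Real.exp (R - x) := by
            rw [hK, mul_assoc, ← Real.exp_add]; rfl
          rw [this]
          have e2 : 1 ≤ Real.exp (R - x) := Real.one_le_exp (by linarith)
          have : (1 + x) ^ (M - 2) ≤ (1 + R) ^ (M - 2) := by gcongr
          calc c * (1 + x) ^ (M - 2) ≤ c * (1 + R) ^ (M - 2) := by gcongr
            _ ≤ _ := le_mul_of_one_le_right (by positivity) e2
        have : 0 ≤ η * (1 + x) ^ M := by positivity
        linarith
      · push Not at hxR
        rw [hR, div_lt_iff₀ hη] at hxR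
        have : c * (1 + x) ^ (M - 2) ≤ η * (1 + x) ^ M := by
          rcases Nat.lt_or_ge M 2 with h | h
          · have : M = 0 := by omega
            have : c = 0 := by simp [hc, this]
            rw [this]; simp; positivity
          · obtain ⟨n, hn⟩ := Nat.exists_eq_add_of_le h
            have e : (1 + x) ^ M = (1 + x) ^ (M - 2) * (1 + x) ^ 2 := by
              rw [← pow_add]; congr 1; omega
            rw [e]
            have : c ≤ η * (1 + x) ^ 2 := by nlinarith
            calc c * (1 + x) ^ (M - 2) ≤ (η * (1 + x) ^ 2) * (1 + x) ^ (M - 2) := by gcongr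
              _ = _ := by ring
        linarith

/-! ### Integration tools -/

theorem hasDerivAt_integral_param {L : ℝ} {H H' : ℝ → ℝ → ℝ}
    (hH : Continuous (fun p : ℝ × ℝ => H p.1 p.2)) (hH' : Continuous (fun p : ℝ × ℝ => H' p.1 p.2))
    (hd : ∀ s ψ, HasDerivAt (fun ψ' => H s ψ') (H' s ψ) ψ) (x : ℝ) :
    HasDerivAt (fun ψ => ∫ s in (0:ℝ)..L, H s ψ) (∫ s in (0:ℝ)..L, H' s x) x := by
  have hK : IsCompact (uIcc 0 L ×ˢ Metric.closedBall x 1) :=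
    isCompact_uIcc.prod (isCompact_closedBall x 1)
  obtain ⟨C, hC⟩ := hK.exists_bound_of_continuousOn hH'.continuousOn
  have cH : ∀ y, Continuous (fun s => H s y) := fun y =>
    hH.comp (Continuous.prodMk_left y)
  have cH' : ∀ y, Continuous (fun s => H' s y) := fun y =>
    hH'.comp (Continuous.prodMk_left y)
  refine (intervalIntegral.hasDerivAt_integral_of_dominated_loc_of_deriv_le
    (F := fun ψ s => H s ψ) (F' := fun ψ s => H' s ψ) (bound := fun _ => C)
    (Metric.closedBall_mem_nhds x one_pos) ?_ ((cH x).intervalIntegrable _ _)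
    (cH' x).aestronglyMeasurable ?_ intervalIntegrable_const ?_).2
  · exact Eventually.of_forall fun y => (cH y).aestronglyMeasurable
  · refine Eventually.of_forall fun s hs y hy => hC (s, y) ⟨uIoc_subset_uIcc hs, hy⟩
  · exact Eventually.of_forall fun s _ y _ => hd s y

theorem div_lemma {L : ℝ} (hL : 0 < L) {H H' D : ℝ → ℝ → ℝ}
    (hH : Continuous (fun p : ℝ × ℝ => H p.1 p.2)) (hH' : Continuous (fun p : ℝ × ℝ => H' p.1 p.2))
    (hd : ∀ s ψ, HasDerivAt (fun ψ' => H s ψ') (H' s ψ) ψ)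
    (hH0 : ∀ s, H s 0 = 0)
    (hHi : IntegrableOn (fun p : ℝ × ℝ => H p.1 p.2) (Ioc (0:ℝ) L ×ˢ Ioi (0:ℝ)))
    (hDi : IntegrableOn (fun p : ℝ × ℝ => D p.1 p.2) (Ioc (0:ℝ) L ×ˢ Ioi (0:ℝ)))
    (hHD : ∀ ψ, 0 < ψ → ∫ s in (0:ℝ)..L, H' s ψ = ∫ s in (0:ℝ)..L, D s ψ) :
    ∫ p in Ioc (0:ℝ) L ×ˢ Ioi (0:ℝ), D p.1 p.2 = 0 := by
  unfold IntegrableOn at hHi hDi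
  rw [Measure.volume_eq_prod, ← Measure.prod_restrict] at hHi hDi
  rw [Measure.volume_eq_prod, ← Measure.prod_restrict, integral_prod_symm _ hDi]
  have i1 := hHi.integral_prod_right
  have i2 := hDi.integral_prod_right
  have hB := fun x => hasDerivAt_integral_param (L := L) hH hH' hd x
  have hIH : ∀ ψ, ∫ s in (0:ℝ)..L, H s ψ = ∫ s in Ioc 0 L, H s ψ := fun ψ =>
    intervalIntegral.integral_of_le hL.le
  have hID : ∀ ψ, ∫ s in (0:ℝ)..L, D s ψ = ∫ s in Ioc 0 L, D s ψ := fun ψ =>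
    intervalIntegral.integral_of_le hL.le
  have hB' : ∀ x ∈ Ioi (0:ℝ), HasDerivAt (fun ψ => ∫ s in (0:ℝ)..L, H s ψ)
      (∫ s in Ioc 0 L, D s x) x := fun x hx => by
    rw [← hID, ← hHD x hx]; exact hB x
  have i1' : IntegrableOn (fun ψ => ∫ s in (0:ℝ)..L, H s ψ) (Ioi 0) := by
    simp only [hIH]; exact i1
  have ht := tendsto_zero_of_hasDerivAt_of_integrableOn_Ioi hB' i2 i1'
  rw [integral_Ioi_of_hasDerivAt_of_tendsto (hB 0).continuousAt.continuousWithinAt hB' i2 ht]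
  simp [hH0]

theorem measSet_dom (L : ℝ) : MeasurableSet (Ioc (0:ℝ) L ×ˢ Ioi (0:ℝ)) :=
  measurableSet_Ioc.prod measurableSet_Ioi

/-- Domination principle for squared `L²` norms. -/
theorem L2_dom {L : ℝ} {ι : Type*} (S : Finset ι) (A : ℝ) (h : ℝ → ℝ → ℝ) (g : ι → ℝ → ℝ → ℝ)
    (hc : Continuous (fun p : ℝ × ℝ => h p.1 p.2))
    (hg : ∀ i ∈ S, FiniteL2 L (g i))
    (hb : ∀ s ψ, s ∈ Icc 0 L → 0 < ψ → (h s ψ) ^ 2 ≤ A * ∑ i ∈ S, (g i s ψ) ^ 2) :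
    FiniteL2 L h ∧ L2sq L h ≤ A * ∑ i ∈ S, L2sq L (g i) := by
  have hi : IntegrableOn (fun p : ℝ × ℝ => A * ∑ i ∈ S, (g i p.1 p.2) ^ 2)
      (Ioc (0:ℝ) L ×ˢ Ioi (0:ℝ)) := (integrable_finsetSum S hg).const_mul A
  have hf : FiniteL2 L h := by
    refine Integrable.mono' hi (hc.pow 2).aestronglyMeasurable ?_
    refine (ae_restrict_iff' (measSet_dom L)).2 (Eventually.of_forall fun p hp => ?_)
    rw [Real.norm_of_nonneg (sq_nonneg _)]
    exact hb _ _ (Ioc_subset_Icc_self hp.1) hp.2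
  refine ⟨hf, ?_⟩
  have : A * ∑ i ∈ S, L2sq L (g i) =
      ∫ p in Ioc (0:ℝ) L ×ˢ Ioi (0:ℝ), A * ∑ i ∈ S, (g i p.1 p.2) ^ 2 := by
    rw [integral_const_mul, integral_finsetSum S hg]; rfl
  rw [this]
  exact setIntegral_mono_on hf hi (measSet_dom L) fun p hp =>
    hb _ _ (Ioc_subset_Icc_self hp.1) hp.2

/-! ### The energy estimate -/

theorem prod_abs_bound {x y w A X : ℝ} (hX : |X| ≤ A * w) (hA : 0 ≤ A) (hw : 0 ≤ w) :
    |x * y * X| ≤ A * (w * (x ^ 2 + y ^ 2)) := by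
  have h1 : |x * y| ≤ x ^ 2 + y ^ 2 := by
    rw [abs_le]; constructor <;> nlinarith [sq_nonneg (x + y), sq_nonneg (x - y), sq_nonneg x, sq_nonneg y]
  rw [abs_mul]
  calc |x * y| * |X| ≤ (x ^ 2 + y ^ 2) * (A * w) := by gcongr
    _ = _ := by ring

theorem pointwise_lower {a v vp f g w W W1 W2 c0 c1 A η : ℝ} (hc0 : 0 < c0) (hc1 : 0 < c1)
    (hη : 0 < η) (ha0 : c0 ≤ a) (ha1 : a ≤ c1) (hA : 0 < A) (hw : 0 ≤ w) (hW0 : w ≤ W)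
    (hW : W ≤ A * w) (hW1 : |W1| ≤ A * w) (hW2 : W2 ≤ (c0 * η / (2 * c1)) * w) :
    w * vp ^ 2 ≤ (2 / c0) * (a * vp ^ 2 * W - f * v * W + g * vp * W + g * v * W1
      - a * v ^ 2 * W2 / 2) + (2 / c0) * (2 * A ^ 2 / (c0 * η) + A / (2 * c0)) *
      (w * f ^ 2 + w * g ^ 2) + η * (w * v ^ 2) := by
  have hW0' : 0 ≤ W := hw.trans hW0
  have yg : ∀ (h X : ℝ), |X| ≤ A * w → h * v * X ≤ (c0 * η / 8) * (w * v ^ 2) +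
      (2 * A ^ 2 / (c0 * η)) * (w * h ^ 2) := by
    intro h X hX
    have e1 : h * v * X ≤ |h| * |v| * (A * w) := by
      calc h * v * X ≤ |h * v * X| := le_abs_self _
        _ = |h| * |v| * |X| := by rw [abs_mul, abs_mul]
        _ ≤ _ := by gcongr
    have e2 : |h| * |v| * A ≤ (c0 * η / 8) * v ^ 2 + (2 * A ^ 2 / (c0 * η)) * h ^ 2 := by
      have hp : 0 < c0 * η := by positivity
      have : (c0 * η / 8) * v ^ 2 + (2 * A ^ 2 / (c0 * η)) * h ^ 2 - |h| * |v| * A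
          = (c0 * η * |v| - 4 * A * |h|) ^ 2 / (8 * (c0 * η)) := by
        rw [← sq_abs v, ← sq_abs h]
        field_simp
        ring
      have h2 : 0 ≤ (c0 * η * |v| - 4 * A * |h|) ^ 2 / (8 * (c0 * η)) := by positivity
      linarith
    calc h * v * X ≤ w * (|h| * |v| * A) := by linarith
      _ ≤ w * ((c0 * η / 8) * v ^ 2 + (2 * A ^ 2 / (c0 * η)) * h ^ 2) := by gcongr
      _ = _ := by ring
  have t1 := yg f W (by rwa [abs_of_nonneg hW0'])
  have t2 := yg (-g) W1 hW1
  have t3 : -(g * vp * W) ≤ c0 / 2 * vp ^ 2 * W + A / (2 * c0) * (w * g ^ 2) := by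
    have e : c0 / 2 * vp ^ 2 + g ^ 2 / (2 * c0) + g * vp = (c0 * vp + g) ^ 2 / (2 * c0) := by
      field_simp; ring
    have h2 : 0 ≤ (c0 * vp + g) ^ 2 / (2 * c0) := by positivity
    have h3 : -(g * vp) ≤ c0 / 2 * vp ^ 2 + g ^ 2 / (2 * c0) := by linarith
    calc -(g * vp * W) = -(g * vp) * W := by ring
      _ ≤ (c0 / 2 * vp ^ 2 + g ^ 2 / (2 * c0)) * W := by gcongr
      _ = c0 / 2 * vp ^ 2 * W + g ^ 2 / (2 * c0) * W := by ring
      _ ≤ c0 / 2 * vp ^ 2 * W + g ^ 2 / (2 * c0) * (A * w) := by gcongr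
      _ = _ := by ring
  have t4 : a * v ^ 2 * W2 / 2 ≤ (c0 * η / 4) * (w * v ^ 2) := by
    have : 0 < a := by linarith
    calc a * v ^ 2 * W2 / 2 ≤ a * v ^ 2 * ((c0 * η / (2 * c1)) * w) / 2 := by gcongr
      _ ≤ c1 * v ^ 2 * ((c0 * η / (2 * c1)) * w) / 2 := by gcongr
      _ = _ := by field_simp; ring
  have t5 : c0 * vp ^ 2 * W ≤ a * vp ^ 2 * W := by gcongr
  have t6 : c0 / 2 * (w * vp ^ 2) ≤ c0 / 2 * vp ^ 2 * W := by
    calc c0 / 2 * (w * vp ^ 2) = c0 / 2 * vp ^ 2 * w := by ring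
      _ ≤ _ := by gcongr
  have t7 : 0 ≤ A / (2 * c0) * (w * f ^ 2) := by positivity
  have main : c0 / 2 * (w * vp ^ 2) ≤ (a * vp ^ 2 * W - f * v * W + g * vp * W + g * v * W1
      - a * v ^ 2 * W2 / 2) + (2 * A ^ 2 / (c0 * η) + A / (2 * c0)) *
      (w * f ^ 2 + w * g ^ 2) + (c0 * η / 2) * (w * v ^ 2) := by
    linarith
  calc w * vp ^ 2 = (2 / c0) * (c0 / 2 * (w * vp ^ 2)) := by field_simp
    _ ≤ (2 / c0) * ((a * vp ^ 2 * W - f * v * W + g * vp * W + g * v * W1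
      - a * v ^ 2 * W2 / 2) + (2 * A ^ 2 / (c0 * η) + A / (2 * c0)) *
      (w * f ^ 2 + w * g ^ 2) + (c0 * η / 2) * (w * v ^ 2)) := by gcongr
    _ = _ := by field_simp

theorem energy {L : ℝ} (hL : 0 < L) (c0 c1 : ℝ) (hc0 : 0 < c0) (hc1 : 0 < c1) (m : ℕ) (η : ℝ)
    (hη : 0 < η) : ∃ C > (0:ℝ), ∀ (a : ℝ → ℝ) (v vs vp P Pp f g : ℝ → ℝ → ℝ),
    Continuous a → (∀ s ∈ Icc 0 L, c0 ≤ a s ∧ a s ≤ c1) →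
    Continuous (fun p : ℝ × ℝ => v p.1 p.2) → Continuous (fun p : ℝ × ℝ => vs p.1 p.2) →
    Continuous (fun p : ℝ × ℝ => vp p.1 p.2) → Continuous (fun p : ℝ × ℝ => P p.1 p.2) →
    Continuous (fun p : ℝ × ℝ => Pp p.1 p.2) → Continuous (fun p : ℝ × ℝ => f p.1 p.2) →
    Continuous (fun p : ℝ × ℝ => g p.1 p.2) →
    (∀ s ψ, HasDerivAt (fun s' => v s' ψ) (vs s ψ) s) →
    (∀ s ψ, HasDerivAt (fun ψ' => v s ψ') (vp s ψ) ψ) →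
    (∀ s ψ, HasDerivAt (fun ψ' => P s ψ') (Pp s ψ) ψ) →
    (∀ s ψ, P s ψ = a s * vp s ψ + g s ψ) →
    (∀ s ψ, 0 < ψ → vs s ψ = Pp s ψ + f s ψ) →
    (∀ s, v s 0 = 0) → (∀ ψ, v L ψ = v 0 ψ) →
    FiniteL2 L (wt m v) → FiniteL2 L (wt m vp) → FiniteL2 L (wt m f) → FiniteL2 L (wt m g) →
    L2sq L (wt m vp) ≤ C * (L2sq L (wt m f) + L2sq L (wt m g)) + η * L2sq L (wt m v) := by
  obtain ⟨W, W1, W2, A, hA, dW, dW1, cW, cW1, cW2, hW⟩ :=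
    exists_weight m (c0 * η / (2 * c1)) (by positivity)
  refine ⟨(2 / c0) * (2 * A ^ 2 / (c0 * η) + A / (2 * c0)), by positivity, ?_⟩
  intro a v vs vp P Pp f g ca ha cv cvs cvp cP cPp cf cg dvs dvp dP hP heq hv0 hper iv ivp if' ig
  set H : ℝ → ℝ → ℝ := fun s ψ => P s ψ * v s ψ * W ψ - a s * v s ψ ^ 2 * W1 ψ / 2 with hHdef
  set H' : ℝ → ℝ → ℝ := fun s ψ => Pp s ψ * v s ψ * W ψ + P s ψ * vp s ψ * W ψ
    + P s ψ * v s ψ * W1 ψ - a s * v s ψ * vp s ψ * W1 ψ - a s * v s ψ ^ 2 * W2 ψ / 2 with hH'def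
  set D : ℝ → ℝ → ℝ := fun s ψ => a s * vp s ψ ^ 2 * W ψ - f s ψ * v s ψ * W ψ
    + g s ψ * vp s ψ * W ψ + g s ψ * v s ψ * W1 ψ - a s * v s ψ ^ 2 * W2 ψ / 2 with hDdef
  have ca' : Continuous (fun p : ℝ × ℝ => a p.1) := ca.comp continuous_fst
  have cW' : Continuous (fun p : ℝ × ℝ => W p.2) := cW.comp continuous_snd
  have cW1' : Continuous (fun p : ℝ × ℝ => W1 p.2) := cW1.comp continuous_snd
  have cW2' : Continuous (fun p : ℝ × ℝ => W2 p.2) := cW2.comp continuous_snd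
  have cH : Continuous (fun p : ℝ × ℝ => H p.1 p.2) := by
    simp only [hHdef]; fun_prop
  have cH' : Continuous (fun p : ℝ × ℝ => H' p.1 p.2) := by
    simp only [hH'def]; fun_prop
  have cD : Continuous (fun p : ℝ × ℝ => D p.1 p.2) := by
    simp only [hDdef]; fun_prop
  have dH : ∀ s ψ, HasDerivAt (fun ψ' => H s ψ') (H' s ψ) ψ := by
    intro s ψ
    have h1 := ((dP s ψ).fun_mul (dvp s ψ)).fun_mul (dW ψ)
    have h2 := ((((dvp s ψ).fun_pow 2).const_mul (a s)).fun_mul (dW1 ψ)).div_const 2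
    refine (h1.fun_sub h2).congr_deriv ?_
    simp only [hH'def]
    push_cast
    ring
  have hsq : ∀ (h : ℝ → ℝ → ℝ) (s ψ : ℝ), (wt m h s ψ) ^ 2 = ((1 + ψ) ^ m) ^ 2 * (h s ψ) ^ 2 :=
    fun h s ψ => by simp only [wt]; ring
  set Y : ℝ → ℝ → ℝ := fun s ψ => (wt m v s ψ) ^ 2 + (wt m vp s ψ) ^ 2 + (wt m f s ψ) ^ 2
    + (wt m g s ψ) ^ 2 with hY
  have iY : IntegrableOn (fun p : ℝ × ℝ => Y p.1 p.2) (Ioc (0:ℝ) L ×ˢ Ioi (0:ℝ)) :=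
    ((iv.add ivp).add if').add ig
  have iH : IntegrableOn (fun p : ℝ × ℝ => H p.1 p.2) (Ioc (0:ℝ) L ×ˢ Ioi (0:ℝ)) := by
    refine Integrable.mono' (iY.const_mul (3 * c1 * A + A)) cH.aestronglyMeasurable ?_
    refine (ae_restrict_iff' (measSet_dom L)).2 (Eventually.of_forall fun p hp => ?_)
    obtain ⟨s, ψ⟩ := p
    have hs := ha s (Ioc_subset_Icc_self hp.1)
    obtain ⟨w0, w1, w2, w3, w4⟩ := hW ψ hp.2
    have hw : 0 ≤ ((1 + ψ) ^ m) ^ 2 := by positivity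
    simp only [hHdef, hY, hsq, Real.norm_eq_abs, hP]
    have haa : |a s| ≤ c1 := by rw [abs_of_pos (by linarith)]; exact hs.2
    have b1 := prod_abs_bound (x := vp s ψ) (y := v s ψ) (X := W ψ)
      (by rwa [abs_of_nonneg (by linarith)]) hA.le hw
    have b2 := prod_abs_bound (x := g s ψ) (y := v s ψ) (X := W ψ)
      (by rwa [abs_of_nonneg (by linarith)]) hA.le hw
    have b3 := prod_abs_bound (x := v s ψ) (y := v s ψ) w2 hA.le hw
    set w := ((1 + ψ) ^ m) ^ 2
    have e : (a s * vp s ψ + g s ψ) * v s ψ * W ψ - a s * v s ψ ^ 2 * W1 ψ / 2 =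
      a s * (vp s ψ * v s ψ * W ψ) + g s ψ * v s ψ * W ψ
        - a s * (v s ψ * v s ψ * W1 ψ) / 2 := by ring
    rw [e]
    have d1 : |a s * (vp s ψ * v s ψ * W ψ)| ≤ c1 * (A * (w * (vp s ψ ^ 2 + v s ψ ^ 2))) := by
      rw [abs_mul]; gcongr
    have d3 : |a s * (v s ψ * v s ψ * W1 ψ)| ≤ c1 * (A * (w * (v s ψ ^ 2 + v s ψ ^ 2))) := by
      rw [abs_mul]; gcongr
    have n1 : 0 ≤ A * (w * v s ψ ^ 2) := by positivity
    have n2 : 0 ≤ A * (w * vp s ψ ^ 2) := by positivity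
    have n3 : 0 ≤ A * (w * f s ψ ^ 2) := by positivity
    have n4 : 0 ≤ A * (w * g s ψ ^ 2) := by positivity
    have m1 := mul_nonneg hc1.le n1
    have m2 := mul_nonneg hc1.le n2
    have m3 := mul_nonneg hc1.le n3
    have m4 := mul_nonneg hc1.le n4
    rw [abs_le] at d1 b2 d3 ⊢
    constructor <;> linarith [d1.1, d1.2, b2.1, b2.2, d3.1, d3.2]
  have iD : IntegrableOn (fun p : ℝ × ℝ => D p.1 p.2) (Ioc (0:ℝ) L ×ˢ Ioi (0:ℝ)) := by
    refine Integrable.mono' (iY.const_mul (4 * c1 * A + 4 * A)) cD.aestronglyMeasurable ?_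
    refine (ae_restrict_iff' (measSet_dom L)).2 (Eventually.of_forall fun p hp => ?_)
    obtain ⟨s, ψ⟩ := p
    have hs := ha s (Ioc_subset_Icc_self hp.1)
    obtain ⟨w0, w1, w2, w3, w4⟩ := hW ψ hp.2
    have hw : 0 ≤ ((1 + ψ) ^ m) ^ 2 := by positivity
    simp only [hDdef, hY, hsq, Real.norm_eq_abs]
    have haa : |a s| ≤ c1 := by rw [abs_of_pos (by linarith)]; exact hs.2
    have w1' : |W ψ| ≤ A * ((1 + ψ) ^ m) ^ 2 := by rwa [abs_of_nonneg (by linarith)]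
    have b1 := prod_abs_bound (x := vp s ψ) (y := vp s ψ) w1' hA.le hw
    have b2 := prod_abs_bound (x := f s ψ) (y := v s ψ) w1' hA.le hw
    have b3 := prod_abs_bound (x := g s ψ) (y := vp s ψ) w1' hA.le hw
    have b4 := prod_abs_bound (x := g s ψ) (y := v s ψ) w2 hA.le hw
    have b5 := prod_abs_bound (x := v s ψ) (y := v s ψ) w3 hA.le hw
    set w := ((1 + ψ) ^ m) ^ 2
    have e : a s * vp s ψ ^ 2 * W ψ - f s ψ * v s ψ * W ψ
      + g s ψ * vp s ψ * W ψ + g s ψ * v s ψ * W1 ψ - a s * v s ψ ^ 2 * W2 ψ / 2 =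
      a s * (vp s ψ * vp s ψ * W ψ) - f s ψ * v s ψ * W ψ
      + g s ψ * vp s ψ * W ψ + g s ψ * v s ψ * W1 ψ - a s * (v s ψ * v s ψ * W2 ψ) / 2 := by ring
    rw [e]
    have d1 : |a s * (vp s ψ * vp s ψ * W ψ)| ≤ c1 * (A * (w * (vp s ψ ^ 2 + vp s ψ ^ 2))) := by
      rw [abs_mul]; gcongr
    have d3 : |a s * (v s ψ * v s ψ * W2 ψ)| ≤ c1 * (A * (w * (v s ψ ^ 2 + v s ψ ^ 2))) := by
      rw [abs_mul]; gcongr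
    have n1 : 0 ≤ A * (w * v s ψ ^ 2) := by positivity
    have n2 : 0 ≤ A * (w * vp s ψ ^ 2) := by positivity
    have n3 : 0 ≤ A * (w * f s ψ ^ 2) := by positivity
    have n4 : 0 ≤ A * (w * g s ψ ^ 2) := by positivity
    have m1 := mul_nonneg hc1.le n1
    have m2 := mul_nonneg hc1.le n2
    have m3 := mul_nonneg hc1.le n3
    have m4 := mul_nonneg hc1.le n4
    rw [abs_le] at d1 b2 b3 b4 d3 ⊢
    constructor <;> linarith [d1.1, d1.2, b2.1, b2.2, b3.1, b3.2, b4.1, b4.2, d3.1, d3.2]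
  have hD0 : ∫ p in Ioc (0:ℝ) L ×ˢ Ioi (0:ℝ), D p.1 p.2 = 0 := by
    refine div_lemma hL cH cH' dH (fun s => by simp [hHdef, hv0]) iH iD ?_
    intro ψ hψ
    have sl : ∀ {h : ℝ → ℝ → ℝ}, Continuous (fun p : ℝ × ℝ => h p.1 p.2) →
        Continuous (fun s => h s ψ) := fun hh => hh.comp (Continuous.prodMk_left ψ)
    have ce : Continuous (fun s => v s ψ * vs s ψ * W ψ) :=
      ((sl cv).mul (sl cvs)).mul continuous_const
    have e : ∀ s, H' s ψ = D s ψ + v s ψ * vs s ψ * W ψ := by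
      intro s
      simp only [hH'def, hDdef]
      rw [heq s ψ hψ, hP]
      ring
    have hz : ∫ s in (0:ℝ)..L, v s ψ * vs s ψ * W ψ = 0 := by
      have hd : ∀ s ∈ uIcc 0 L, HasDerivAt (fun s => v s ψ ^ 2 * (W ψ / 2)) (v s ψ * vs s ψ * W ψ) s :=
        fun s _ => (((dvs s ψ).fun_pow 2).mul_const (W ψ / 2)).congr_deriv (by push_cast; ring)
      rw [intervalIntegral.integral_eq_sub_of_hasDerivAt hd (ce.intervalIntegrable _ _), hper]
      ring
    simp only [e]
    rw [intervalIntegral.integral_add ((sl cD).intervalIntegrable _ _) (ce.intervalIntegrable _ _), hz,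
      add_zero]
  set C := (2 / c0) * (2 * A ^ 2 / (c0 * η) + A / (2 * c0)) with hC
  have iR1 := iD.const_mul (2 / c0)
  have iR2 := (if'.add ig).const_mul C
  have iR3 := Integrable.const_mul iv η
  have hR : (C * (L2sq L (wt m f) + L2sq L (wt m g)) + η * L2sq L (wt m v)) =
      ∫ p in Ioc (0:ℝ) L ×ˢ Ioi (0:ℝ), ((2 / c0) * D p.1 p.2 +
        C * ((wt m f p.1 p.2) ^ 2 + (wt m g p.1 p.2) ^ 2) + η * (wt m v p.1 p.2) ^ 2) := by
    have s1 := integral_add (iR1.add iR2) iR3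
    have s2 := integral_add iR1 iR2
    have s3 := integral_add if' ig
    simp only [Pi.add_apply] at s1 s2 s3
    rw [s1, s2, integral_const_mul, integral_const_mul, integral_const_mul, hD0, s3]
    simp only [L2sq]
    ring
  rw [hR]
  refine setIntegral_mono_on ivp ((iR1.add iR2).add iR3) (measSet_dom L) ?_
  rintro ⟨s, ψ⟩ hp
  have hs := ha s (Ioc_subset_Icc_self hp.1)
  obtain ⟨w0, w1, w2, w3, w4⟩ := hW ψ hp.2
  simp only [hsq, hDdef]
  exact pointwise_lower hc0 hc1 hη hs.1 hs.2 hA (by positivity) w0 w1 w2 w4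

theorem L2sq_nonneg (L : ℝ) (h : ℝ → ℝ → ℝ) : 0 ≤ L2sq L h :=
  integral_nonneg fun _ => sq_nonneg _

theorem lift_bound {L : ℝ} (hL : 0 < L) (m : ℕ) : ∃ A > (0:ℝ), ∀ β : ℝ → ℝ, Continuous β →
    FiniteL2 L (wt m (fun s ψ => Real.exp (-ψ) * β s)) ∧
    L2sq L (wt m (fun s ψ => Real.exp (-ψ) * β s)) ≤ A * ∫ s in (0:ℝ)..L, (β s) ^ 2 := by
  have hi : IntegrableOn (fun ψ : ℝ => ((1 + ψ) ^ m * Real.exp (-ψ)) ^ 2) (Ioi 0) := by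
    refine integrable_of_isBigO_exp_neg (b := 1) one_pos (by fun_prop) ?_
    have h1 : (fun ψ : ℝ => (1 + ψ) ^ (2 * m)) =o[atTop] fun ψ => Real.exp (1 + ψ) :=
      (Real.isLittleO_pow_exp_atTop (n := 2 * m)).comp_tendsto (tendsto_atTop_add_const_left _ 1 tendsto_id)
    have h2 := h1.isBigO.mul (Asymptotics.isBigO_refl (fun ψ : ℝ => Real.exp (-2 * ψ)) atTop)
    have h3 : (fun ψ : ℝ => Real.exp (1 + ψ) * Real.exp (-2 * ψ)) =O[atTop]
        fun ψ => Real.exp (-1 * ψ) := by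
      have : (fun ψ : ℝ => Real.exp (1 + ψ) * Real.exp (-2 * ψ)) =
          fun ψ => Real.exp 1 * Real.exp (-1 * ψ) := by
        funext ψ; rw [← Real.exp_add, ← Real.exp_add]; ring_nf
      rw [this]
      exact Asymptotics.isBigO_const_mul_self _ _ _
    refine (h2.trans h3).congr_left fun ψ => ?_
    rw [mul_pow, ← pow_mul, mul_comm m 2, ← Real.exp_nat_mul]
    push_cast; ring_nf
  set A0 : ℝ := ∫ ψ in Ioi (0:ℝ), ((1 + ψ) ^ m * Real.exp (-ψ)) ^ 2 with hA0
  have hA00 : 0 ≤ A0 := integral_nonneg fun _ => sq_nonneg _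
  refine ⟨A0 + 1, by positivity, fun β cβ => ?_⟩
  have e : ∀ p : ℝ × ℝ, (wt m (fun s ψ => Real.exp (-ψ) * β s) p.1 p.2) ^ 2 =
      (β p.1) ^ 2 * ((1 + p.2) ^ m * Real.exp (-p.2)) ^ 2 := fun p => by simp only [wt]; ring
  have hβ : IntegrableOn (fun s => (β s) ^ 2) (Ioc 0 L) :=
    ((cβ.pow 2).integrableOn_Icc).mono_set Ioc_subset_Icc_self
  constructor
  · unfold FiniteL2 IntegrableOn
    simp only [e]
    rw [Measure.volume_eq_prod, ← Measure.prod_restrict]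
    exact hβ.mul_prod hi
  · unfold L2sq
    simp only [e]
    rw [Measure.volume_eq_prod, setIntegral_prod_mul (fun s => (β s) ^ 2)
      (fun ψ : ℝ => ((1 + ψ) ^ m * Real.exp (-ψ)) ^ 2), intervalIntegral.integral_of_le hL.le, ← hA0]
    have : 0 ≤ ∫ s in Ioc 0 L, (β s) ^ 2 := integral_nonneg fun _ => sq_nonneg _
    nlinarith

theorem HnormSq_ge {L : ℝ} (hL : 0 < L) (n j : ℕ) (hj : j ≤ n) (b : ℝ → ℝ) :
    ∫ s in (0:ℝ)..L, (iteratedDeriv j b s) ^ 2 ≤ HnormSq L n b :=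
  Finset.single_le_sum (f := fun j => ∫ s in (0:ℝ)..L, (iteratedDeriv j b s) ^ 2)
    (fun _ _ => intervalIntegral.integral_nonneg hL.le fun _ _ => sq_nonneg _)
    (Finset.mem_range.2 (by omega))

set_option maxHeartbeats 2000000 in
/-- **The `∂_ψ` energy estimate for the `s`-differentiated linear Prandtl problem.** -/
theorem linear_prandtl_dpsi_estimate
    (L : ℝ) (hL : 0 < L)
    (q_e : ℝ → ℝ) (hqe : ContDiff ℝ (⊤ : ℕ∞) q_e) (hqeper : Function.Periodic q_e L)
    (hqepos : ∀ s, 0 < q_e s)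
    (ω₀ : ℝ) (hω₀ : 0 < ω₀) (k m : ℕ) (δ : ℝ) (hδ : 0 < δ) :
    ∃ C > (0:ℝ), ∀ Q F G : ℝ → ℝ → ℝ, ∀ b : ℝ → ℝ,
      Smooth2 Q → PeriodicS L Q → Smooth2 F → PeriodicS L F →
      Smooth2 G → PeriodicS L G → ContDiff ℝ (⊤ : ℕ∞) b → Function.Periodic b L →
      (∀ s : ℝ, ∀ ψ > (0:ℝ),
        dS 1 Q s ψ - ω₀ * q_e s * dPsi 2 Q s ψ = F s ψ + dPsi 2 G s ψ) →
      (∀ s : ℝ, Q s 0 = b s) →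
      (∀ s : ℝ, Tendsto (fun ψ => Q s ψ) atTop (nhds 0)) →
      -- finiteness of all norms appearing
      (∀ k' ≤ k, FiniteL2 L (wt m (dPsi 1 (dS k' Q)))) →
      FiniteL2 L (wt m (dS k F)) → FiniteL2 L (wt m (dPsi 2 (dS k G))) →
      FiniteL2 L (wt m (dS k Q)) → FiniteL2 L (wt (m-1) (dS k Q)) →
      L2sq L (wt m (dPsi 1 (dS k Q)))
        ≤ C * L2sq L (wt m (dS k F)) + C * L2sq L (wt m (dPsi 2 (dS k G)))
          + C * HnormSq L (k+1) b
          + δ * L2sq L (wt m (dS k Q))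
          + C * (∑ k' ∈ Finset.range k, L2sq L (wt m (dPsi 1 (dS k' Q))))
          + (if 1 ≤ m then L2sq L (wt (m-1) (dS k Q)) else 0) := by
  classical
  -- bounds for the coefficients
  obtain ⟨c0, hc0, hc0'⟩ : ∃ c0 > 0, ∀ s ∈ Icc 0 L, c0 ≤ ω₀ * q_e s := by
    obtain ⟨x, _, hx⟩ := (isCompact_Icc (a := (0:ℝ)) (b := L)).exists_isMinOn
      (nonempty_Icc.2 hL.le) hqe.continuous.continuousOn
    exact ⟨ω₀ * q_e x, mul_pos hω₀ (hqepos x), fun s hs =>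
      mul_le_mul_of_nonneg_left (hx hs) hω₀.le⟩
  obtain ⟨c1, hc1, hc1'⟩ : ∃ c1 > 0, ∀ s ∈ Icc 0 L, ω₀ * q_e s ≤ c1 := by
    obtain ⟨x, _, hx⟩ := (isCompact_Icc (a := (0:ℝ)) (b := L)).exists_isMaxOn
      (nonempty_Icc.2 hL.le) hqe.continuous.continuousOn
    exact ⟨ω₀ * q_e x, mul_pos hω₀ (hqepos x), fun s hs =>
      mul_le_mul_of_nonneg_left (hx hs) hω₀.le⟩
  have cqd : ∀ n : ℕ, Continuous (iteratedDeriv n q_e) := fun n =>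
    hqe.continuous_iteratedDeriv n (by exact_mod_cast le_top)
  obtain ⟨M, hM0, hM⟩ : ∃ M ≥ 0, ∀ i < k, ∀ s ∈ Icc 0 L,
      (ω₀ * ((k.choose i : ℝ) * iteratedDeriv (k - i) q_e s)) ^ 2 ≤ M := by
    have hx : ∀ i : ℕ, ∃ B : ℝ, ∀ s ∈ Icc 0 L,
        (ω₀ * ((k.choose i : ℝ) * iteratedDeriv (k - i) q_e s)) ^ 2 ≤ B := fun i => by
      have hc : Continuous (fun s => (ω₀ * ((k.choose i : ℝ) * iteratedDeriv (k - i) q_e s)) ^ 2) := by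
        have := cqd (k - i)
        fun_prop
      obtain ⟨B, hB⟩ := (isCompact_Icc (a := (0:ℝ)) (b := L)).exists_bound_of_continuousOn
        hc.continuousOn
      exact ⟨B, fun s hs => (le_abs_self _).trans (hB s hs)⟩
    choose B hB using hx
    refine ⟨∑ i ∈ Finset.range k, |B i|, Finset.sum_nonneg fun _ _ => abs_nonneg _,
      fun i hi s hs => ((hB i s hs).trans (le_abs_self _)).trans ?_⟩
    exact Finset.single_le_sum (f := fun i => |B i|) (fun _ _ => abs_nonneg _)
      (Finset.mem_range.2 hi)
  obtain ⟨C1, hC1, hE⟩ := energy hL c0 c1 hc0 hc1 m (δ / 4) (by positivity)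
  obtain ⟨Ae, hAe, hLift⟩ := lift_bound hL m
  set A4 : ℝ := 4 * (1 + c1 ^ 2) with hA4
  have hA4p : 0 < A4 := by positivity
  set Ag : ℝ := k * M with hAg
  have hAgp : 0 ≤ Ag := by positivity
  refine ⟨2 * C1 * A4 + 2 * C1 * Ag + (4 * C1 * A4 * Ae + δ * Ae + 2 * Ae), by positivity, ?_⟩
  intro Q F G b hQ hQp hF _ hG _ hb hbp heq hQ0 _ iQ iF iG iu _
  set β : ℝ → ℝ := iteratedDeriv k b with hβ
  set β1 : ℝ → ℝ := iteratedDeriv (k+1) b with hβ1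
  have cβ : Continuous β := hb.continuous_iteratedDeriv k (by exact_mod_cast le_top)
  have cβ1 : Continuous β1 := hb.continuous_iteratedDeriv (k+1) (by exact_mod_cast le_top)
  have dβ : ∀ s, HasDerivAt β (β1 s) s := fun s => by
    rw [hβ1, iteratedDeriv_succ]
    have : Differentiable ℝ (iteratedDeriv k b) :=
      hb.differentiable_iteratedDeriv k (by exact_mod_cast ENat.natCast_lt_top k)
    exact (this s).hasDerivAt
  obtain ⟨iE, bE⟩ := hLift β cβ
  obtain ⟨iE1, bE1⟩ := hLift β1 cβ1
  set E : ℝ → ℝ → ℝ := fun s ψ => Real.exp (-ψ) * β s with hEdef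
  set E1 : ℝ → ℝ → ℝ := fun s ψ => Real.exp (-ψ) * β1 s with hE1def
  have hsu := smooth_dS hQ k
  set u := dS k Q with hu
  have cE : Continuous (fun p : ℝ × ℝ => E p.1 p.2) := by
    simp only [hEdef]; fun_prop
  have cE1 : Continuous (fun p : ℝ × ℝ => E1 p.1 p.2) := by
    simp only [hE1def]; fun_prop
  have cu : Continuous (fun p : ℝ × ℝ => u p.1 p.2) := hsu.continuous
  have cup : Continuous (fun p : ℝ × ℝ => dPsi 1 u p.1 p.2) := (smooth_dPsi_one hsu).continuous
  have cus : Continuous (fun p : ℝ × ℝ => dS 1 u p.1 p.2) := (smooth_dS_one hsu).continuous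
  have cFk : Continuous (fun p : ℝ × ℝ => dS k F p.1 p.2) := (smooth_dS hF k).continuous
  have cGk : Continuous (fun p : ℝ × ℝ => dPsi 2 (dS k G) p.1 p.2) :=
    (smooth_dPsi_two (smooth_dS hG k)).continuous
  have cQ1 : ∀ i, Continuous (fun p : ℝ × ℝ => dPsi 1 (dS i Q) p.1 p.2) := fun i =>
    (smooth_dPsi_one (smooth_dS hQ i)).continuous
  have cQ2 : ∀ i, Continuous (fun p : ℝ × ℝ => dPsi 2 (dS i Q) p.1 p.2) := fun i =>
    (smooth_dPsi_two (smooth_dS hQ i)).continuous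
  have cq : Continuous (fun p : ℝ × ℝ => q_e p.1) := hqe.continuous.comp continuous_fst
  have cqd' : ∀ n : ℕ, Continuous (fun p : ℝ × ℝ => iteratedDeriv n q_e p.1) := fun n =>
    (cqd n).comp continuous_fst
  have cwt : ∀ {h : ℝ → ℝ → ℝ}, Continuous (fun p : ℝ × ℝ => h p.1 p.2) →
      Continuous (fun p : ℝ × ℝ => wt m h p.1 p.2) := fun hh => by
    simp only [wt]; fun_prop
  have dexp : ∀ x : ℝ, HasDerivAt (fun x => Real.exp (-x)) (-Real.exp (-x)) x := fun x => by
    simpa using (hasDerivAt_neg x).exp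
  have dEp : ∀ s ψ, HasDerivAt (fun ψ' => E s ψ') (-E s ψ) ψ := fun s ψ =>
    ((dexp ψ).mul_const (β s)).congr_deriv (by simp only [hEdef]; ring)
  have dEs : ∀ s ψ, HasDerivAt (fun s' => E s' ψ) (E1 s ψ) s := fun s ψ =>
    (dβ s).const_mul (Real.exp (-ψ))
  -- the unknowns of the lifted problem
  set v : ℝ → ℝ → ℝ := fun s ψ => u s ψ - E s ψ with hv
  set vs : ℝ → ℝ → ℝ := fun s ψ => dS 1 u s ψ - E1 s ψ with hvs
  set vp : ℝ → ℝ → ℝ := fun s ψ => dPsi 1 u s ψ + E s ψ with hvp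
  set f : ℝ → ℝ → ℝ := fun s ψ => dS k F s ψ + dPsi 2 (dS k G) s ψ - E1 s ψ
    + ω₀ * q_e s * E s ψ with hf
  set g : ℝ → ℝ → ℝ := fun s ψ => ∑ i ∈ Finset.range k, ω₀ * ((k.choose i : ℝ) *
    iteratedDeriv (k - i) q_e s) * dPsi 1 (dS i Q) s ψ with hg
  set P : ℝ → ℝ → ℝ := fun s ψ => ω₀ * q_e s * vp s ψ + g s ψ with hP
  set Pp : ℝ → ℝ → ℝ := fun s ψ => ω₀ * q_e s * (dPsi 2 u s ψ - E s ψ) +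
    ∑ i ∈ Finset.range k, ω₀ * ((k.choose i : ℝ) *
      iteratedDeriv (k - i) q_e s) * dPsi 2 (dS i Q) s ψ with hPp
  have cv : Continuous (fun p : ℝ × ℝ => v p.1 p.2) := cu.sub cE
  have cvs : Continuous (fun p : ℝ × ℝ => vs p.1 p.2) := cus.sub cE1
  have cvp : Continuous (fun p : ℝ × ℝ => vp p.1 p.2) := cup.add cE
  have cf : Continuous (fun p : ℝ × ℝ => f p.1 p.2) := by
    exact ((cFk.add cGk).sub cE1).add ((continuous_const.mul cq).mul cE)
  have cg : Continuous (fun p : ℝ × ℝ => g p.1 p.2) := by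
    exact continuous_finsetSum _ fun i _ => (continuous_const.mul (continuous_const.mul (cqd' (k - i)))).mul (cQ1 i)
  have cP : Continuous (fun p : ℝ × ℝ => P p.1 p.2) := by
    exact ((continuous_const.mul cq).mul cvp).add cg
  have cPp : Continuous (fun p : ℝ × ℝ => Pp p.1 p.2) := by
    exact ((continuous_const.mul cq).mul ((cQ2 k).sub cE)).add
      (continuous_finsetSum _ fun i _ => (continuous_const.mul (continuous_const.mul (cqd' (k - i)))).mul (cQ2 i))
  -- norms of the data
  obtain ⟨iv, bv⟩ : FiniteL2 L (wt m v) ∧ L2sq L (wt m v) ≤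
      2 * ∑ i : Fin 2, L2sq L (![wt m u, wt m E] i) := by
    refine L2_dom Finset.univ 2 _ _ (cwt cv) ?_ ?_
    · intro i _; fin_cases i <;> assumption
    · intro s ψ _ _
      simp only [Fin.sum_univ_two, Matrix.cons_val_zero, Matrix.cons_val_one, wt, hv]
      nlinarith [sq_nonneg ((1 + ψ) ^ m * u s ψ + (1 + ψ) ^ m * E s ψ)]
  have iup := iQ k le_rfl
  obtain ⟨ivp, _⟩ : FiniteL2 L (wt m vp) ∧ L2sq L (wt m vp) ≤
      2 * ∑ i : Fin 2, L2sq L (![wt m (dPsi 1 u), wt m E] i) := by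
    refine L2_dom Finset.univ 2 _ _ (cwt cvp) ?_ ?_
    · intro i _; fin_cases i <;> assumption
    · intro s ψ _ _
      simp only [Fin.sum_univ_two, Matrix.cons_val_zero, Matrix.cons_val_one, wt, hvp]
      nlinarith [sq_nonneg ((1 + ψ) ^ m * dPsi 1 u s ψ - (1 + ψ) ^ m * E s ψ)]
  obtain ⟨_, bup⟩ : FiniteL2 L (wt m (dPsi 1 u)) ∧ L2sq L (wt m (dPsi 1 u)) ≤
      2 * ∑ i : Fin 2, L2sq L (![wt m vp, wt m E] i) := by
    refine L2_dom Finset.univ 2 _ _ (cwt cup) ?_ ?_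
    · intro i _; fin_cases i <;> assumption
    · intro s ψ _ _
      simp only [Fin.sum_univ_two, Matrix.cons_val_zero, Matrix.cons_val_one, wt, hvp]
      nlinarith [sq_nonneg ((1 + ψ) ^ m * dPsi 1 u s ψ + 2 * ((1 + ψ) ^ m * E s ψ))]
  obtain ⟨if', bf⟩ : FiniteL2 L (wt m f) ∧ L2sq L (wt m f) ≤
      A4 * ∑ i : Fin 4, L2sq L (![wt m (dS k F), wt m (dPsi 2 (dS k G)), wt m E1, wt m E] i) := by
    refine L2_dom Finset.univ A4 _ _ (cwt cf) ?_ ?_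
    · intro i _; fin_cases i <;> assumption
    · intro s ψ hs _
      have ha0 : 0 ≤ ω₀ * q_e s := hc0.le.trans (hc0' s hs)
      have ha1 := hc1' s hs
      have e : wt m f s ψ = wt m (dS k F) s ψ + wt m (dPsi 2 (dS k G)) s ψ - wt m E1 s ψ
          + ω₀ * q_e s * wt m E s ψ := by simp only [wt, hf]; ring
      have hsum : ∑ i : Fin 4, (![wt m (dS k F), wt m (dPsi 2 (dS k G)), wt m E1, wt m E] i s ψ) ^ 2
          = wt m (dS k F) s ψ ^ 2 + wt m (dPsi 2 (dS k G)) s ψ ^ 2 + wt m E1 s ψ ^ 2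
            + wt m E s ψ ^ 2 := by
        simp [Fin.sum_univ_four]
      rw [e, hsum]
      generalize wt m (dS k F) s ψ = x1
      generalize wt m (dPsi 2 (dS k G)) s ψ = x2
      generalize wt m E1 s ψ = x3
      generalize wt m E s ψ = x4
      have h1 : (x1 + x2 - x3 + ω₀ * q_e s * x4) ^ 2 ≤
          4 * (x1 ^ 2 + x2 ^ 2 + x3 ^ 2 + (ω₀ * q_e s * x4) ^ 2) := by
        generalize ω₀ * q_e s * x4 = y
        nlinarith [sq_nonneg (x1 - x2), sq_nonneg (x1 + x3), sq_nonneg (x1 - y),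
          sq_nonneg (x2 + x3), sq_nonneg (x2 - y), sq_nonneg (x3 + y)]
      have h2 : (ω₀ * q_e s * x4) ^ 2 ≤ c1 ^ 2 * x4 ^ 2 := by
        rw [mul_pow]; gcongr
      have h3 : 0 ≤ c1 ^ 2 * (x1 ^ 2 + x2 ^ 2 + x3 ^ 2) := by positivity
      rw [hA4]
      nlinarith [sq_nonneg x4]
  obtain ⟨ig, bg⟩ : FiniteL2 L (wt m g) ∧ L2sq L (wt m g) ≤
      Ag * ∑ i ∈ Finset.range k, L2sq L (wt m (dPsi 1 (dS i Q))) := by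
    refine L2_dom (Finset.range k) Ag _ (fun i => wt m (dPsi 1 (dS i Q))) (cwt cg) ?_ ?_
    · intro i hi; exact iQ i (Finset.mem_range.1 hi).le
    · intro s ψ hs _
      have e : wt m g s ψ = ∑ i ∈ Finset.range k, ω₀ * ((k.choose i : ℝ) *
          iteratedDeriv (k - i) q_e s) * wt m (dPsi 1 (dS i Q)) s ψ := by
        simp only [wt, hg, Finset.mul_sum]
        exact Finset.sum_congr rfl fun i _ => by ring
      rw [e]
      refine (sq_sum_le_card_mul_sum_sq).trans ?_
      rw [Finset.card_range, hAg, mul_assoc]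
      refine mul_le_mul_of_nonneg_left ?_ (Nat.cast_nonneg k)
      rw [Finset.mul_sum]
      refine Finset.sum_le_sum fun i hi => ?_
      rw [mul_pow]
      exact mul_le_mul_of_nonneg_right (hM i (Finset.mem_range.1 hi) s hs) (sq_nonneg _)
  have key := hE (fun s => ω₀ * q_e s) v vs vp P Pp f g (continuous_const.mul hqe.continuous)
    (fun s hs => ⟨hc0' s hs, hc1' s hs⟩) cv cvs cvp cP cPp cf cg
    (fun s ψ => (hasDerivAt_dS hsu s ψ).fun_sub (dEs s ψ))
    (fun s ψ => ((hasDerivAt_dPsi hsu s ψ).fun_sub (dEp s ψ)).congr_deriv (by simp [hvp]))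
    (fun s ψ => by
      have d2 : ∀ i, HasDerivAt (fun ψ' => dPsi 1 (dS i Q) s ψ') (dPsi 2 (dS i Q) s ψ) ψ :=
        fun i => by
          rw [dPsi_two]; exact hasDerivAt_dPsi (smooth_dPsi_one (smooth_dS hQ i)) s ψ
      have h1 := (((d2 k).fun_add (dEp s ψ)).const_mul (ω₀ * q_e s))
      have h2 := HasDerivAt.fun_sum (u := Finset.range k) fun i _ =>
        (d2 i).const_mul (ω₀ * ((k.choose i : ℝ) * iteratedDeriv (k - i) q_e s))
      exact (h1.fun_add h2).congr_deriv (by simp only [hPp, hu]; ring))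
    (fun s ψ => rfl)
    (fun s ψ hψ => by
      have h := diff_equation hqe k hQ hF hG heq s ψ hψ
      rw [Finset.sum_range_succ, mul_add, Finset.mul_sum] at h
      simp only [hvs, hPp, hf, hu]
      rw [h]
      have e : ∑ i ∈ Finset.range k, ω₀ * ((k.choose i : ℝ) *
          iteratedDeriv (k - i) q_e s * dPsi 2 (dS i Q) s ψ) =
          ∑ i ∈ Finset.range k, ω₀ * ((k.choose i : ℝ) *
          iteratedDeriv (k - i) q_e s) * dPsi 2 (dS i Q) s ψ :=
        Finset.sum_congr rfl fun i _ => by ring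
      rw [e]
      simp only [Nat.choose_self, Nat.sub_self, iteratedDeriv_zero, Nat.cast_one]
      ring)
    (fun s => by
      have : (fun s' => Q s' 0) = b := funext hQ0
      simp only [hv, hu, hEdef, hβ, dS, this]; simp)
    (fun ψ => by
      have h1 := iteratedDeriv_periodic (hQp ψ) k 0
      have h2 := iteratedDeriv_periodic hbp k 0
      rw [zero_add] at h1 h2
      simp only [hv, hu, hEdef, hβ, dS, h1, h2])
    iv ivp if' ig
  simp only [Fin.sum_univ_two, Matrix.cons_val_zero, Matrix.cons_val_one] at bv bup
  have hsum4 : ∑ i : Fin 4, L2sq L (![wt m (dS k F), wt m (dPsi 2 (dS k G)), wt m E1, wt m E] i)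
      = L2sq L (wt m (dS k F)) + L2sq L (wt m (dPsi 2 (dS k G))) + L2sq L (wt m E1)
        + L2sq L (wt m E) := by
    simp [Fin.sum_univ_four]
  rw [hsum4] at bf
  have bE' : L2sq L (wt m E) ≤ Ae * HnormSq L (k+1) b :=
    bE.trans (mul_le_mul_of_nonneg_left (HnormSq_ge hL (k+1) k (by omega) b) hAe.le)
  have bE1' : L2sq L (wt m E1) ≤ Ae * HnormSq L (k+1) b :=
    bE1.trans (mul_le_mul_of_nonneg_left (HnormSq_ge hL (k+1) (k+1) le_rfl b) hAe.le)
  have hite : 0 ≤ (if 1 ≤ m then L2sq L (wt (m-1) u) else 0) := by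
    split_ifs
    · exact L2sq_nonneg _ _
    · exact le_rfl
  have nF := L2sq_nonneg L (wt m (dS k F))
  have nG := L2sq_nonneg L (wt m (dPsi 2 (dS k G)))
  have nS : 0 ≤ ∑ i ∈ Finset.range k, L2sq L (wt m (dPsi 1 (dS i Q))) :=
    Finset.sum_nonneg fun _ _ => L2sq_nonneg _ _
  have nH : 0 ≤ HnormSq L (k+1) b :=
    (intervalIntegral.integral_nonneg hL.le fun _ _ => sq_nonneg _).trans
      (HnormSq_ge hL (k+1) k (by omega) b)
  generalize L2sq L (wt m (dS k F)) = xF at *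
  generalize L2sq L (wt m (dPsi 2 (dS k G))) = xG at *
  generalize (∑ i ∈ Finset.range k, L2sq L (wt m (dPsi 1 (dS i Q)))) = xS at *
  generalize HnormSq L (k+1) b = xH at *
  generalize (if 1 ≤ m then L2sq L (wt (m-1) u) else 0) = xI at *
  generalize L2sq L (wt m (dPsi 1 u)) = xU at *
  generalize L2sq L (wt m u) = xu at *
  generalize L2sq L (wt m v) = xv at *
  generalize L2sq L (wt m vp) = xvp at *
  generalize L2sq L (wt m f) = xf at *
  generalize L2sq L (wt m g) = xg at *
  generalize L2sq L (wt m E) = xE at *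
  generalize L2sq L (wt m E1) = xE1 at *
  have bf2 : xf ≤ A4 * (xF + xG + 2 * (Ae * xH)) :=
    bf.trans (mul_le_mul_of_nonneg_left (by linarith) hA4p.le)
  have k1 : C1 * (xf + xg) ≤ C1 * (A4 * (xF + xG + 2 * (Ae * xH)) + Ag * xS) :=
    mul_le_mul_of_nonneg_left (by linarith) hC1.le
  have k2 : δ / 4 * xv ≤ δ / 4 * (2 * (xu + Ae * xH)) :=
    mul_le_mul_of_nonneg_left (by linarith) (by positivity)
  have k3 : xU ≤ 2 * (C1 * (A4 * (xF + xG + 2 * (Ae * xH)) + Ag * xS)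
      + δ / 4 * (2 * (xu + Ae * xH)) + Ae * xH) := by linarith
  have p1 : 0 ≤ 2 * C1 * A4 := by positivity
  have p2 : 0 ≤ 2 * C1 * Ag := by positivity
  have p3 : 0 ≤ 4 * C1 * A4 * Ae + δ * Ae + 2 * Ae := by positivity
  have r1 : 2 * C1 * A4 * (xF + xG) ≤ (2 * C1 * A4 + 2 * C1 * Ag +
      (4 * C1 * A4 * Ae + δ * Ae + 2 * Ae)) * (xF + xG) :=
    mul_le_mul_of_nonneg_right (by linarith) (by linarith)
  have r2 : 2 * C1 * Ag * xS ≤ (2 * C1 * A4 + 2 * C1 * Ag +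
      (4 * C1 * A4 * Ae + δ * Ae + 2 * Ae)) * xS :=
    mul_le_mul_of_nonneg_right (by linarith) nS
  have r3 : (4 * C1 * A4 * Ae + δ * Ae + 2 * Ae) * xH ≤ (2 * C1 * A4 + 2 * C1 * Ag +
      (4 * C1 * A4 * Ae + δ * Ae + 2 * Ae)) * xH :=
    mul_le_mul_of_nonneg_right (by linarith) nH
  have e1 : 2 * (C1 * (A4 * (xF + xG + 2 * (Ae * xH)) + Ag * xS)
      + δ / 4 * (2 * (xu + Ae * xH)) + Ae * xH) = 2 * C1 * A4 * (xF + xG) + 2 * C1 * Ag * xS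
      + (4 * C1 * A4 * Ae + δ * Ae + 2 * Ae) * xH + δ * xu := by ring
  linarith
end
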